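/- arXiv:1504.03227 — 2 statements merged into one kernel-verified Lean document; each statement's English description precedes it below -/
import Mathlib

section
/- For any prime p ≥ 3 and any integer r ≥ 1, the sum of 1/(ijk) over all triples (i,j,k) of positive integers with i+j+k = p^r and each of i,j,k coprime to p is congruent to -2·p^{r-1}·B_{p-3} modulo p^r, where B_n denotes the n-th Bernoulli number. -/
/-- `x ≡ y (mod p^r)` as p-integral rationals. -/
def ratCong (p r : ℕ) (x y : ℚ) : Prop :=
  ∃ z : ℚ, x - y = (p : ℚ) ^ r * z ∧ ¬ (p ∣ z.den)

/-- Sum of `1/(l₁⋯lₙ)` over positive `n`-tuples summing to `N` with each `lᵢ` coprime to `p`. -/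
def hsum (p n N : ℕ) : ℚ :=
  ∑ l ∈ (Fintype.piFinset fun _ : Fin n => Finset.Icc 1 N) |>.filter
      (fun l => ∑ i, l i = N ∧ ∀ i, ¬ p ∣ l i),
    ∏ i, (1 : ℚ) / l i

open Finset

/-- p-integral rationals -/
def pR (p : ℕ) [Fact p.Prime] : Subring ℚ where
  carrier := {x | ¬ p ∣ x.den}
  mul_mem' := by
    intro a b ha hb h
    rcases (Nat.Prime.dvd_mul Fact.out).1 (h.trans (Rat.mul_den_dvd a b)) with h | h
    · exact ha h
    · exact hb h
  add_mem' := by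
    intro a b ha hb h
    rcases (Nat.Prime.dvd_mul Fact.out).1 (h.trans (Rat.add_den_dvd a b)) with h | h
    · exact ha h
    · exact hb h
  one_mem' := by
    have := (Fact.out : p.Prime).one_lt
    simp; omega
  zero_mem' := by
    have := (Fact.out : p.Prime).one_lt
    simp; omega
  neg_mem' := by
    intro a ha
    simpa using ha

lemma mem_pR {p : ℕ} [Fact p.Prime] {x : ℚ} : x ∈ pR p ↔ ¬ p ∣ x.den := Iff.rfl

lemma den_ne {p : ℕ} [Fact p.Prime] {x : ℚ} (hx : x ∈ pR p) : (x.den : ZMod p) ≠ 0 := by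
  rw [Ne, ZMod.natCast_eq_zero_iff]; exact hx

/-- reduction mod p -/
def red (p : ℕ) [Fact p.Prime] : pR p →+* ZMod p where
  toFun x := ((x : ℚ) : ZMod p)
  map_one' := by simp
  map_zero' := by simp
  map_add' := by
    intro a b
    exact Rat.cast_add_of_ne_zero (den_ne a.2) (den_ne b.2)
  map_mul' := by
    intro a b
    exact Rat.cast_mul_of_ne_zero (den_ne a.2) (den_ne b.2)

lemma nat_mem {p : ℕ} [Fact p.Prime] (n : ℕ) : (n : ℚ) ∈ pR p := natCast_mem _ n

lemma inv_mem {p : ℕ} [Fact p.Prime] {n : ℕ} (hn : ¬ p ∣ n) : (1 : ℚ) / n ∈ pR p := by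
  have h0 : n ≠ 0 := by rintro rfl; simp at hn
  rw [mem_pR, one_div, Rat.inv_natCast_den]
  simpa [h0] using hn

lemma red_zero {p : ℕ} [Fact p.Prime] (x : pR p) (h : red p x = 0) :
    ∃ z ∈ pR p, (x : ℚ) = p * z := by
  have h1 : ((x : ℚ) : ZMod p) = 0 := h
  rw [Rat.cast_def, div_eq_zero_iff] at h1
  rcases h1 with h1 | h1
  · rw [ZMod.intCast_zmod_eq_zero_iff_dvd] at h1
    obtain ⟨k, hk⟩ := h1
    refine ⟨k * (1 / (x : ℚ).den), mul_mem (intCast_mem _ _) (inv_mem x.2), ?_⟩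
    conv_lhs => rw [← Rat.num_div_den (x : ℚ)]
    rw [hk]; push_cast; ring
  · exact absurd h1 (den_ne x.2)

/-- units below M -/
def U (p M : ℕ) : Finset ℕ := (range M).filter (fun x => ¬ p ∣ x)

lemma mem_U {p M x : ℕ} : x ∈ U p M ↔ x < M ∧ ¬ p ∣ x := by simp [U]

/-- Sum over triples of units below M with total s M -/
def T (p s M : ℕ) : ℚ :=
  ∑ x ∈ U p M, ∑ y ∈ U p M, ∑ z ∈ U p M,
    if x + y + z = s * M then (1 : ℚ) / x * (1 / y) * (1 / z) else 0

lemma T_mem {p : ℕ} [Fact p.Prime] (s M : ℕ) : T p s M ∈ pR p := by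
  refine sum_mem fun x hx => sum_mem fun y hy => sum_mem fun z hz => ?_
  rw [mem_U] at hx hy hz
  split_ifs
  · exact mul_mem (mul_mem (inv_mem hx.2) (inv_mem hy.2)) (inv_mem hz.2)
  · exact zero_mem _

lemma hsum_eq {p M : ℕ} (hM : p ∣ M) : hsum p 3 M = T p 1 M := by
  unfold hsum T
  simp_rw [← Finset.sum_product']
  rw [← Finset.sum_filter]
  refine Finset.sum_nbij' (fun l => (l 0, l 1, l 2)) (fun t => ![t.1, t.2.1, t.2.2]) ?_ ?_ ?_ ?_ ?_
  · intro l hl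
    simp only [mem_filter, Fintype.mem_piFinset, mem_Icc, Fin.sum_univ_three] at hl
    obtain ⟨h1, h2, h3⟩ := hl
    have hn : ∀ i, l i < M := fun i => lt_of_le_of_ne (h1 i).2 (fun h => h3 i (h ▸ hM))
    simp [mem_U, hn, h3, h2]
  · rintro ⟨x, y, z⟩ h
    simp only [mem_filter, mem_product, mem_U] at h
    obtain ⟨⟨⟨hx, hx'⟩, ⟨hy, hy'⟩, ⟨hz, hz'⟩⟩, h⟩ := h
    have : ∀ t, ¬ p ∣ t → 1 ≤ t := by
      rintro t ht
      rcases Nat.eq_zero_or_pos t with rfl | h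
      · simp at ht
      · exact h
    simp only [mem_filter, Fintype.mem_piFinset, mem_Icc, Fin.sum_univ_three, Fin.forall_fin_succ]
    simp [hx', hy', hz', this, hx.le, hy.le, hz.le]
    omega
  · intro l _
    funext i
    fin_cases i <;> rfl
  · rintro ⟨x, y, z⟩ h
    rfl
  · intro l _
    simp [Fin.prod_univ_three]
    ring

lemma sum_U_mul {p M : ℕ} (hM : p ∣ M) (hM0 : 0 < M) (f : ℕ → ℚ) :
    ∑ x ∈ U p (p * M), f x = ∑ x ∈ U p M, ∑ a ∈ range p, f (x + M * a) := by
  rw [← Finset.sum_product']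
  have key : ∀ x a, p ∣ x + M * a ↔ p ∣ x := fun x a =>
    (Nat.dvd_add_iff_left (hM.mul_right a)).symm
  refine Finset.sum_nbij' (fun x => (x % M, x / M)) (fun t => t.1 + M * t.2) ?_ ?_ ?_ ?_ ?_
  · intro x hx
    simp only [mem_U, mem_product, mem_range] at hx ⊢
    refine ⟨⟨Nat.mod_lt _ hM0, ?_⟩, ?_⟩
    · rw [← key (x % M) (x / M), Nat.mod_add_div]; exact hx.2
    · rw [Nat.div_lt_iff_lt_mul hM0]; exact hx.1
  · rintro ⟨x, a⟩ h
    simp only [mem_U, mem_product, mem_range] at h ⊢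
    refine ⟨?_, by rw [key]; exact h.1.2⟩
    calc x + M * a < M + M * a := by omega
      _ = (a + 1) * M := by ring
      _ ≤ p * M := Nat.mul_le_mul_right _ h.2
  · intro x _
    exact Nat.mod_add_div x M
  · rintro ⟨x, a⟩ h
    simp only [mem_U, mem_product, mem_range] at h
    simp [Nat.add_mul_mod_self_left, Nat.mod_eq_of_lt h.1.1, Nat.add_mul_div_left _ _ hM0,
      Nat.div_eq_of_lt h.1.1]
  · intro x _
    simp only [Nat.mod_add_div]

/-- weighted sums over digit triples -/
def W (p n : ℕ) (f : ℕ → ℕ → ℕ → ℚ) : ℚ :=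
  ∑ a ∈ range p, ∑ b ∈ range p, ∑ c ∈ range p, if a + b + c = n then f a b c else 0

lemma W_fst {p n : ℕ} (hn : n < p) (hn2 : p ≤ n + 2) (f : ℕ → ℚ) :
    W p n (fun a _ _ => f a) = ∑ a ∈ range p, f a * (n + 1 - a) := by
  unfold W
  refine sum_congr rfl fun a ha => ?_
  rw [mem_range] at ha
  have h1 : ∀ b ∈ range p, (∑ c ∈ range p, if a + b + c = n then f a else 0)
      = if b < n + 1 - a then f a else 0 := by
    intro b _
    split_ifs with h
    · rw [Finset.sum_eq_single (n - a - b)]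
      · rw [if_pos (by omega)]
      · intro c _ hc
        rw [if_neg (by omega)]
      · intro h'; simp at h'; omega
    · refine Finset.sum_eq_zero fun c _ => ?_
      rw [if_neg (by omega)]
  rw [sum_congr rfl h1, ← Finset.sum_filter]
  have : (range p).filter (fun b => b < n + 1 - a) = range (n + 1 - a) := by
    ext b; simp; omega
  rw [this, sum_const, card_range, nsmul_eq_mul, Nat.cast_sub (by omega)]
  push_cast; ring

lemma W_swap12 (p n : ℕ) (f : ℕ → ℚ) : W p n (fun _ b _ => f b) = W p n (fun a _ _ => f a) := by
  unfold W
  rw [sum_comm]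
  simp_rw [add_comm]

lemma W_swap13 (p n : ℕ) (f : ℕ → ℚ) : W p n (fun _ _ c => f c) = W p n (fun _ b _ => f b) := by
  unfold W
  refine sum_congr rfl fun a _ => ?_
  rw [sum_comm]
  simp_rw [add_right_comm]

lemma sum_id_q (p : ℕ) : ∑ a ∈ range p, (a : ℚ) = p * (p - 1) / 2 := by
  induction p with
  | zero => simp
  | succ n ih => rw [sum_range_succ, ih]; push_cast; ring

lemma sum_sq_q (p : ℕ) : ∑ a ∈ range p, (a : ℚ) ^ 2 = p * (p - 1) * (2 * p - 1) / 6 := by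
  induction p with
  | zero => simp
  | succ n ih => rw [sum_range_succ, ih]; push_cast; ring

lemma W_one {p n : ℕ} (hn : n < p) (hn2 : p ≤ n + 2) :
    W p n (fun _ _ _ => 1) = p * (2 * n + 3 - p) / 2 := by
  rw [W_fst hn hn2 (fun _ => 1)]
  simp only [one_mul]
  rw [sum_sub_distrib, sum_id_q]
  simp; ring

lemma W_a {p n : ℕ} (hn : n < p) (hn2 : p ≤ n + 2) :
    6 * W p n (fun a _ _ => a) = p * ((p - 1) * (3 * n + 3 - 2 * p + 1)) := by
  rw [W_fst hn hn2 (fun a => (a : ℚ))]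
  have : ∀ a ∈ range p, (a : ℚ) * (n + 1 - a) = (n + 1) * a - a ^ 2 := by intros; ring
  rw [sum_congr rfl this, sum_sub_distrib, ← mul_sum, sum_id_q, sum_sq_q]
  ring

lemma W_mem {p : ℕ} [Fact p.Prime] (n : ℕ) (f : ℕ → ℕ → ℕ → ℚ) (hf : ∀ a b c, f a b c ∈ pR p) :
    W p n f ∈ pR p := by
  refine sum_mem fun x _ => sum_mem fun y _ => sum_mem fun z _ => ?_
  split_ifs
  · exact hf _ _ _
  · exact zero_mem _

lemma W_add (p n : ℕ) (f g : ℕ → ℕ → ℕ → ℚ) :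
    W p n (fun a b c => f a b c + g a b c) = W p n f + W p n g := by
  unfold W
  simp_rw [← sum_add_distrib]
  refine sum_congr rfl fun x _ => sum_congr rfl fun y _ => sum_congr rfl fun z _ => ?_
  split_ifs <;> simp

lemma W_mul (p n : ℕ) (k : ℚ) (f : ℕ → ℕ → ℕ → ℚ) :
    W p n (fun a b c => k * f a b c) = k * W p n f := by
  unfold W
  simp_rw [mul_sum]
  refine sum_congr rfl fun x _ => sum_congr rfl fun y _ => sum_congr rfl fun z _ => ?_
  split_ifs <;> simp

lemma expand_one {p M m x a : ℕ} [Fact p.Prime] (hM : M = p * m) (hx : ¬ p ∣ x) :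
    ∃ u ∈ pR p, (1 : ℚ) / (x + M * a : ℕ) = 1 / x - M * a * (1 / x) ^ 2 + M ^ 2 * u := by
  have hx' : ¬ p ∣ x + M * a := by
    rw [← Nat.dvd_add_iff_left ((Dvd.intro m hM.symm).mul_right a)]; exact hx
  refine ⟨(a : ℚ) ^ 2 * (1 / x) ^ 2 * (1 / (x + M * a : ℕ)),
    mul_mem (mul_mem (pow_mem (nat_mem _) _) (pow_mem (inv_mem hx) _)) (inv_mem hx'), ?_⟩
  have h0 : (x : ℚ) ≠ 0 := by
    intro h; norm_cast at h; subst h; simp at hx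
  have h1 : ((x + M * a : ℕ) : ℚ) ≠ 0 := by
    intro h; norm_cast at h; rw [h] at hx'; simp at hx'
  push_cast at h1 ⊢
  field_simp
  ring

lemma expand_three {p M m x y z a b c : ℕ} [Fact p.Prime] (hM : M = p * m)
    (hx : ¬ p ∣ x) (hy : ¬ p ∣ y) (hz : ¬ p ∣ z) :
    ∃ e ∈ pR p, (1 : ℚ) / (x + M * a : ℕ) * (1 / (y + M * b : ℕ)) * (1 / (z + M * c : ℕ)) =
      1 / x * (1 / y) * (1 / z) - M * (1 / x * (1 / y) * (1 / z)) *
        (a * (1 / x) + b * (1 / y) + c * (1 / z)) + p * M * e := by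
  obtain ⟨u, hu, eu⟩ := expand_one (a := a) hM hx
  obtain ⟨v, hv, ev⟩ := expand_one (a := b) hM hy
  obtain ⟨w, hw, ew⟩ := expand_one (a := c) hM hz
  rw [eu, ev, ew]
  have hX := inv_mem hx
  have hY := inv_mem hy
  have hZ := inv_mem hz
  generalize (1 : ℚ) / x = X at *
  generalize (1 : ℚ) / y = Y at *
  generalize (1 : ℚ) / z = Z at *
  have hP : X - M * a * X ^ 2 ∈ pR p :=
    sub_mem hX (mul_mem (mul_mem (nat_mem _) (nat_mem _)) (pow_mem hX _))
  have hQ : Y - M * b * Y ^ 2 ∈ pR p :=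
    sub_mem hY (mul_mem (mul_mem (nat_mem _) (nat_mem _)) (pow_mem hY _))
  have hS : Z - M * c * Z ^ 2 ∈ pR p :=
    sub_mem hZ (mul_mem (mul_mem (nat_mem _) (nat_mem _)) (pow_mem hZ _))
  have hM2 : (M : ℚ) ^ 2 ∈ pR p := pow_mem (nat_mem _) _
  refine ⟨m * (X * Y * Z * (a * X * (b * Y) + a * X * (c * Z) + b * Y * (c * Z)
      - M * (a * X * (b * Y) * (c * Z)))
      + (u * (Y - M * b * Y ^ 2) * (Z - M * c * Z ^ 2)
      + (X - M * a * X ^ 2 + M ^ 2 * u) * v * (Z - M * c * Z ^ 2)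
      + (X - M * a * X ^ 2 + M ^ 2 * u) * (Y - M * b * Y ^ 2 + M ^ 2 * v) * w)), ?_, ?_⟩
  · have ha : (a : ℚ) ∈ pR p := nat_mem a
    have hb : (b : ℚ) ∈ pR p := nat_mem b
    have hc : (c : ℚ) ∈ pR p := nat_mem c
    have hMM : (M : ℚ) ∈ pR p := nat_mem M
    have hm : (m : ℚ) ∈ pR p := nat_mem m
    have h1 := mul_mem ha hX
    have h2 := mul_mem hb hY
    have h3 := mul_mem hc hZ
    have hPu := add_mem hP (mul_mem hM2 hu)
    have hQv := add_mem hQ (mul_mem hM2 hv)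
    exact mul_mem hm (add_mem (mul_mem (mul_mem (mul_mem hX hY) hZ)
      (sub_mem (add_mem (add_mem (mul_mem h1 h2) (mul_mem h1 h3)) (mul_mem h2 h3))
        (mul_mem hMM (mul_mem (mul_mem h1 h2) h3))))
      (add_mem (add_mem (mul_mem (mul_mem hu hQ) hS) (mul_mem (mul_mem hPu hv) hS))
        (mul_mem (mul_mem hPu hQv) hw)))
  · have : (M : ℚ) = p * m := by rw [hM]; push_cast; ring
    have h2 : ∀ t : ℚ, (p : ℚ) * M * (m * t) = M ^ 2 * t := by
      intro t
      calc (p : ℚ) * M * (m * t) = (p * m) * M * t := by ring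
        _ = M ^ 2 * t := by rw [← this]; ring
    rw [h2]
    ring

lemma A_dvd {p n x y z : ℕ} [Fact p.Prime] (hp3 : 3 ≤ p) (hn : n < p) (hn2 : p ≤ n + 2)
    (hx : ¬ p ∣ x) (hy : ¬ p ∣ y) (hz : ¬ p ∣ z) (hs : p ∣ x + y + z) :
    ∃ e ∈ pR p, W p n (fun a _ _ => a) * ((1 : ℚ) / x + 1 / y + 1 / z) = p * e := by
  have hsum := add_mem (add_mem (inv_mem hx) (inv_mem hy)) (inv_mem hz)
  by_cases h : p = 3
  · subst h
    have h1 : 3 ∣ x * y + y * z + z * x := by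
      rw [Nat.dvd_iff_mod_eq_zero] at *
      have hx3 : x % 3 = 1 ∨ x % 3 = 2 := by omega
      have hy3 : y % 3 = 1 ∨ y % 3 = 2 := by omega
      have hz3 : z % 3 = 1 ∨ z % 3 = 2 := by omega
      rcases hx3 with h1 | h1 <;> rcases hy3 with h2 | h2 <;> rcases hz3 with h3 | h3 <;>
        first
        | omega
        | simp [Nat.add_mod, Nat.mul_mod, h1, h2, h3]
    obtain ⟨k, hk⟩ := h1
    refine ⟨W 3 n (fun a _ _ => a) * (k * (1 / x * (1 / y) * (1 / z))),
      mul_mem (W_mem _ _ fun _ _ _ => nat_mem _) (mul_mem (nat_mem _)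
        (mul_mem (mul_mem (inv_mem hx) (inv_mem hy)) (inv_mem hz))), ?_⟩
    have hx0 : (x : ℚ) ≠ 0 := by
      intro h; norm_cast at h; subst h; simp at hx
    have hy0 : (y : ℚ) ≠ 0 := by
      intro h; norm_cast at h; subst h; simp at hy
    have hz0 : (z : ℚ) ≠ 0 := by
      intro h; norm_cast at h; subst h; simp at hz
    have hk' : (x * y + y * z + z * x : ℚ) = 3 * k := by exact_mod_cast hk
    have : (1 : ℚ) / x + 1 / y + 1 / z = 3 * k * (1 / x * (1 / y) * (1 / z)) := by
      rw [← hk']; field_simp; ring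
    rw [this]; push_cast; ring
  · have h6 : ¬ p ∣ 6 := by
      intro h'
      have h2 : p ∣ 2 * 3 := h'
      have hpp : p.Prime := Fact.out
      rcases (Nat.Prime.dvd_mul hpp).1 h2 with h3 | h3
      · have := Nat.le_of_dvd (by norm_num) h3; omega
      · have := Nat.le_of_dvd (by norm_num) h3; omega
    refine ⟨(((p - 1) * (3 * n + 3 - 2 * p + 1)) * (1 / (6 : ℕ))) * (1 / x + 1 / y + 1 / z),
      mul_mem (mul_mem ?_ (inv_mem h6)) hsum, ?_⟩
    · have e : ((p : ℚ) - 1) * (3 * n + 3 - 2 * p + 1)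
          = (((p : ℤ) - 1) * (3 * n + 3 - 2 * p + 1) : ℤ) := by push_cast; ring
      rw [e]; exact intCast_mem _ _
    · have := W_a hn hn2
      have h' : W p n (fun a _ _ => a)
        = p * ((p - 1) * (3 * n + 3 - 2 * p + 1)) * (1 / (6 : ℕ)) := by
        rw [← this]; push_cast; ring
      rw [h']; ring

lemma W_expand {p M m n x y z : ℕ} [Fact p.Prime] (hp3 : 3 ≤ p) (hM : M = p * m)
    (hn : n < p) (hn2 : p ≤ n + 2)
    (hx : ¬ p ∣ x) (hy : ¬ p ∣ y) (hz : ¬ p ∣ z) (hs : p ∣ x + y + z) :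
    ∃ e ∈ pR p, W p n (fun a b c =>
      (1 : ℚ) / (x + M * a : ℕ) * (1 / (y + M * b : ℕ)) * (1 / (z + M * c : ℕ))) =
      p * (2 * n + 3 - p) / 2 * (1 / x * (1 / y) * (1 / z)) + p * M * e := by
  choose e he heq using fun a b c =>
    expand_three (a := a) (b := b) (c := c) hM hx hy hz
  obtain ⟨d, hd, hdeq⟩ := A_dvd hp3 hn hn2 hx hy hz hs
  have hXYZ := mul_mem (mul_mem (inv_mem hx) (inv_mem hy)) (inv_mem hz)
  refine ⟨W p n e - (1 / x * (1 / y) * (1 / z)) * d,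
    sub_mem (W_mem _ _ he) (mul_mem hXYZ hd), ?_⟩
  have : (fun a b c : ℕ =>
      (1 : ℚ) / (x + M * a : ℕ) * (1 / (y + M * b : ℕ)) * (1 / (z + M * c : ℕ))) =
      fun a b c : ℕ => (1 / x * (1 / y) * (1 / z)) * 1 + ((-M * (1 / x * (1 / y) * (1 / z)) * (1 / x)) * a
        + ((-M * (1 / x * (1 / y) * (1 / z)) * (1 / y)) * b
        + ((-M * (1 / x * (1 / y) * (1 / z)) * (1 / z)) * c
        + p * M * e a b c))) := by
    funext a b c
    rw [heq]; ring
  rw [this]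
  rw [W_add p n (fun _ _ _ => _), W_add p n (fun _ _ _ => _), W_add p n (fun _ _ _ => _),
    W_add p n (fun _ _ _ => _)]
  rw [W_mul p n _ (fun _ _ _ => 1), W_mul p n _ (fun a _ _ => (a : ℚ)),
    W_mul p n _ (fun _ b _ => (b : ℚ)), W_mul p n _ (fun _ _ c => (c : ℚ)), W_mul,
    W_swap13 p n (fun c => (c : ℚ)), W_swap12 p n (fun c => (c : ℚ)), W_one hn hn2]
  linear_combination (-M * (1 / x * (1 / y) * (1 / z))) * hdeq

lemma ind_split {p M x y z a b c : ℕ} (hp3 : 3 ≤ p) (hx : 0 < x)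
    (hxM : x < M) (hyM : y < M) (hzM : z < M) (k : ℚ) :
    (if (x + M * a) + (y + M * b) + (z + M * c) = 1 * (p * M) then k else 0) =
      (if x + y + z = 1 * M then (if a + b + c = p - 1 then k else 0) else 0)
      + (if x + y + z = 2 * M then (if a + b + c = p - 2 then k else 0) else 0) := by
  have hM : 0 < M := by omega
  by_cases h1 : x + y + z = 1 * M
  · have e1 : (x + M * a) + (y + M * b) + (z + M * c) = M * (1 + (a + b + c)) := by
      calc _ = (x + y + z) + M * (a + b + c) := by ring
        _ = _ := by rw [h1]; ring
    have e2 : ((x + M * a) + (y + M * b) + (z + M * c) = 1 * (p * M)) ↔ a + b + c = p - 1 := by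
      rw [e1, one_mul, mul_comm p M, Nat.mul_right_inj hM.ne']; omega
    rw [if_pos h1, if_neg (show ¬ (x + y + z = 2 * M) by omega), add_zero]
    simp only [e2]
  · by_cases h2 : x + y + z = 2 * M
    · have e1 : (x + M * a) + (y + M * b) + (z + M * c) = M * (2 + (a + b + c)) := by
        calc _ = (x + y + z) + M * (a + b + c) := by ring
          _ = _ := by rw [h2]; ring
      have e2 : ((x + M * a) + (y + M * b) + (z + M * c) = 1 * (p * M)) ↔ a + b + c = p - 2 := by
        rw [e1, one_mul, mul_comm p M, Nat.mul_right_inj hM.ne']; omega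
      rw [if_neg h1, if_pos h2, zero_add]
      simp only [e2]
    · rw [if_neg h1, if_neg h2, if_neg, add_zero]
      intro h
      have hd : M ∣ x + y + z := by
        have h3 : M ∣ (x + y + z) + M * (a + b + c) := by
          have : (x + y + z) + M * (a + b + c) = 1 * (p * M) := by rw [← h]; ring
          rw [this]; exact ⟨p, by ring⟩
        exact (Nat.dvd_add_iff_left (Dvd.intro _ rfl)).2 h3
      obtain ⟨k, hk⟩ := hd
      have hk3 : k < 3 := by
        by_contra hk3
        have : M * 3 ≤ M * k := Nat.mul_le_mul_left _ (by omega)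
        omega
      interval_cases k <;> omega

lemma T_split {p M : ℕ} (hp3 : 3 ≤ p) (hM : p ∣ M) (hM0 : 0 < M) :
    T p 1 (p * M) = ∑ x ∈ U p M, ∑ y ∈ U p M, ∑ z ∈ U p M,
      ((if x + y + z = 1 * M then W p (p - 1) (fun a b c =>
      (1 : ℚ) / (x + M * a : ℕ) * (1 / (y + M * b : ℕ)) * (1 / (z + M * c : ℕ))) else 0)
      + (if x + y + z = 2 * M then W p (p - 2) (fun a b c =>
      (1 : ℚ) / (x + M * a : ℕ) * (1 / (y + M * b : ℕ)) * (1 / (z + M * c : ℕ))) else 0)) := by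
  unfold T
  rw [sum_U_mul hM hM0]
  refine sum_congr rfl fun x hx => ?_
  have e1 : ∀ a ∈ range p, (∑ y ∈ U p (p * M), ∑ z ∈ U p (p * M),
      if x + M * a + y + z = 1 * (p * M) then
        (1 : ℚ) / (x + M * a : ℕ) * (1 / y) * (1 / z) else 0) =
      ∑ y ∈ U p M, ∑ b ∈ range p, ∑ z ∈ U p M, ∑ c ∈ range p,
        if (x + M * a) + (y + M * b) + (z + M * c) = 1 * (p * M) then
        (1 : ℚ) / (x + M * a : ℕ) * (1 / (y + M * b : ℕ)) * (1 / (z + M * c : ℕ)) else 0 := by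
    intro a _
    rw [sum_U_mul hM hM0]
    refine sum_congr rfl fun y _ => sum_congr rfl fun b _ => ?_
    rw [sum_U_mul hM hM0]
  rw [sum_congr rfl e1, sum_comm]
  refine sum_congr rfl fun y hy => ?_
  have e2 : ∀ a ∈ range p, (∑ b ∈ range p, ∑ z ∈ U p M, ∑ c ∈ range p,
        if (x + M * a) + (y + M * b) + (z + M * c) = 1 * (p * M) then
        (1 : ℚ) / (x + M * a : ℕ) * (1 / (y + M * b : ℕ)) * (1 / (z + M * c : ℕ)) else 0)
      = ∑ z ∈ U p M, ∑ b ∈ range p, ∑ c ∈ range p,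
        if (x + M * a) + (y + M * b) + (z + M * c) = 1 * (p * M) then
        (1 : ℚ) / (x + M * a : ℕ) * (1 / (y + M * b : ℕ)) * (1 / (z + M * c : ℕ)) else 0 := by
    intro a _
    rw [sum_comm]
  rw [sum_congr rfl e2, sum_comm]
  refine sum_congr rfl fun z hz => ?_
  rw [mem_U] at hx hy hz
  have hx0 : 0 < x := by
    rcases Nat.eq_zero_or_pos x with rfl | h
    · simp at hx
    · exact h
  unfold W
  simp_rw [ind_split hp3 hx0 hx.1 hy.1 hz.1, sum_add_distrib]
  congr 1
  · split_ifs <;> simp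
  · split_ifs <;> simp

lemma refl_U {p M : ℕ} (hM : p ∣ M) (f : ℕ → ℚ) :
    ∑ x ∈ U p M, f x = ∑ x ∈ U p M, f (M - x) := by
  have h : ∀ x ∈ U p M, M - x ∈ U p M := by
    intro x hx
    rw [mem_U] at hx ⊢
    have hx0 : 0 < x := by
      rcases Nat.eq_zero_or_pos x with rfl | h
      · simp at hx
      · exact h
    refine ⟨by omega, fun h => hx.2 ?_⟩
    have := Nat.dvd_sub hM h
    rwa [Nat.sub_sub_self hx.1.le] at this
  have h2 : ∀ x ∈ U p M, M - (M - x) = x := fun x hx => by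
    rw [mem_U] at hx; omega
  refine sum_nbij' (fun x => M - x) (fun x => M - x) h h h2 h2 ?_
  intro x hx
  simp only [h2 x hx]

lemma inv_refl {p M x : ℕ} [Fact p.Prime] (hM : p ∣ M) (hx : ¬ p ∣ x) (hxM : x < M) :
    ∃ e ∈ pR p, (1 : ℚ) / (M - x : ℕ) = - (1 / x) + M * e := by
  have hx' : ¬ p ∣ M - x := by
    intro h
    have := Nat.dvd_sub hM h
    rw [Nat.sub_sub_self hxM.le] at this
    exact hx this
  refine ⟨1 / x * (1 / (M - x : ℕ)), mul_mem (inv_mem hx) (inv_mem hx'), ?_⟩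
  have hx0 : (x : ℚ) ≠ 0 := by
    intro h; norm_cast at h; subst h; simp at hx
  have h1 : ((M - x : ℕ) : ℚ) ≠ 0 := by
    intro h; norm_cast at h; rw [h] at hx'; simp at hx'
  rw [Nat.cast_sub hxM.le] at h1 ⊢
  field_simp
  ring

lemma T_two {p M : ℕ} [Fact p.Prime] (hM : p ∣ M) :
    ∃ e ∈ pR p, T p 2 M = - T p 1 M + M * e := by
  have : ∀ x y z : ℕ, ∃ e ∈ pR p, x ∈ U p M → y ∈ U p M → z ∈ U p M →
      (1 : ℚ) / (M - x : ℕ) * (1 / (M - y : ℕ)) * (1 / (M - z : ℕ))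
        = - (1 / x * (1 / y) * (1 / z)) + M * e := by
    intro x y z
    by_cases h : x ∈ U p M ∧ y ∈ U p M ∧ z ∈ U p M
    · obtain ⟨hx, hy, hz⟩ := h
      rw [mem_U] at hx hy hz
      obtain ⟨u, hu, eu⟩ := inv_refl hM hx.2 hx.1
      obtain ⟨v, hv, ev⟩ := inv_refl hM hy.2 hy.1
      obtain ⟨w, hw, ew⟩ := inv_refl hM hz.2 hz.1
      have hX := inv_mem hx.2
      have hY := inv_mem hy.2
      have hZ := inv_mem hz.2
      have hMM : (M : ℚ) ∈ pR p := nat_mem M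
      have hXu := add_mem (neg_mem hX) (mul_mem hMM hu)
      have hYv := add_mem (neg_mem hY) (mul_mem hMM hv)
      refine ⟨u * (1 / y) * (1 / z) - (-(1 / x) + M * u) * v * (1 / z)
        + (-(1 / x) + M * u) * (-(1 / y) + M * v) * w,
        add_mem (sub_mem (mul_mem (mul_mem hu hY) hZ) (mul_mem (mul_mem hXu hv) hZ))
          (mul_mem (mul_mem hXu hYv) hw), fun _ _ _ => ?_⟩
      rw [eu, ev, ew]
      ring
    · exact ⟨0, zero_mem _, fun a b c => absurd ⟨a, b, c⟩ h⟩
  choose e he heq using this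
  refine ⟨∑ x ∈ U p M, ∑ y ∈ U p M, ∑ z ∈ U p M, if x + y + z = 1 * M then e x y z else 0, ?_, ?_⟩
  · refine sum_mem fun x hx => sum_mem fun y hy => sum_mem fun z hz => ?_
    split_ifs
    · exact he _ _ _
    · exact zero_mem _
  · unfold T
    rw [refl_U hM]
    simp_rw [← sum_neg_distrib, mul_sum, ← sum_add_distrib]
    refine sum_congr rfl fun x hx => ?_
    rw [refl_U hM]
    refine sum_congr rfl fun y hy => ?_
    rw [refl_U hM]
    refine sum_congr rfl fun z hz => ?_
    have h' := heq x y z hx hy hz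
    rw [mem_U] at hx hy hz
    by_cases h : x + y + z = 1 * M
    · rw [if_pos h, if_pos (by omega), if_pos h, h']
    · rw [if_neg h, if_neg (by omega), if_neg h]; simp

lemma step {p M : ℕ} [Fact p.Prime] (hp3 : 3 ≤ p) (hM : p ∣ M) (hM0 : 0 < M) :
    ∃ e ∈ pR p, T p 1 (p * M) = p * T p 1 M + p * M * e := by
  obtain ⟨m, hm⟩ := hM
  have hM : p ∣ M := ⟨m, hm⟩
  have key : ∀ n s x y z : ℕ, ∃ e ∈ pR p, n < p → p ≤ n + 2 →
      x ∈ U p M → y ∈ U p M → z ∈ U p M →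
      (if x + y + z = s * M then W p n (fun a b c =>
      (1 : ℚ) / (x + M * a : ℕ) * (1 / (y + M * b : ℕ)) * (1 / (z + M * c : ℕ))) else 0)
      = p * (2 * n + 3 - p) / 2 * (if x + y + z = s * M then
        (1 : ℚ) / x * (1 / y) * (1 / z) else 0) + p * M * e := by
    intro n s x y z
    by_cases h : n < p ∧ p ≤ n + 2 ∧ x ∈ U p M ∧ y ∈ U p M ∧ z ∈ U p M ∧ x + y + z = s * M
    · obtain ⟨h1, h2, hx, hy, hz, h3⟩ := h
      rw [mem_U] at hx hy hz
      obtain ⟨e, he, heq⟩ := W_expand hp3 hm h1 h2 hx.2 hy.2 hz.2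
        (by rw [h3]; exact hM.mul_left s)
      refine ⟨e, he, fun _ _ _ _ _ => ?_⟩
      rw [if_pos h3, if_pos h3, heq]
    · refine ⟨0, zero_mem _, fun a b c d e => ?_⟩
      have : ¬ (x + y + z = s * M) := fun f => h ⟨a, b, c, d, e, f⟩
      rw [if_neg this, if_neg this]; simp
  choose e he heq using key
  obtain ⟨d, hd, hdeq⟩ := T_two (p := p) hM
  have h2 : ¬ p ∣ 2 := fun h => by
    have := Nat.le_of_dvd (by norm_num) h; omega
  refine ⟨(∑ x ∈ U p M, ∑ y ∈ U p M, ∑ z ∈ U p M, (e (p - 1) 1 x y z + e (p - 2) 2 x y z))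
    + (p - 1) * (1 / (2 : ℕ)) * d, add_mem (sum_mem fun x hx => sum_mem fun y hy =>
    sum_mem fun z hz => add_mem (he _ _ _ _ _) (he _ _ _ _ _))
    (mul_mem (mul_mem (sub_mem (nat_mem _) (one_mem _)) (inv_mem h2)) hd), ?_⟩
  have main : T p 1 (p * M) = p * (p + 1) / 2 * T p 1 M + p * (p - 1) / 2 * T p 2 M
      + p * M * (∑ x ∈ U p M, ∑ y ∈ U p M, ∑ z ∈ U p M,
        (e (p - 1) 1 x y z + e (p - 2) 2 x y z)) := by
    rw [T_split hp3 hM hM0]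
    unfold T
    simp_rw [mul_sum, ← sum_add_distrib]
    refine sum_congr rfl fun x hx => sum_congr rfl fun y hy => sum_congr rfl fun z hz => ?_
    rw [heq (p - 1) 1 x y z (by omega) (by omega) hx hy hz,
      heq (p - 2) 2 x y z (by omega) (by omega) hx hy hz,
      Nat.cast_sub (by omega), Nat.cast_sub (by omega)]
    push_cast
    ring
  rw [main, hdeq]
  push_cast
  ring

lemma bern'_mem {p : ℕ} [Fact p.Prime] (n : ℕ) (hn : n + 1 < p) : bernoulli' n ∈ pR p := by
  induction n using Nat.strong_induction_on with
  | _ n ih =>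
    rw [bernoulli'_def]
    refine sub_mem (one_mem _) (sum_mem fun k hk => ?_)
    rw [mem_range] at hk
    refine mul_mem ?_ (ih k hk (by omega))
    have h1 : ¬ p ∣ n - k + 1 := fun h => by
      have := Nat.le_of_dvd (by omega) h; omega
    have h2 : ((n.choose k : ℕ) : ℚ) / ((n : ℚ) - k + 1)
        = (n.choose k : ℕ) * (1 / (n - k + 1 : ℕ)) := by
      push_cast [Nat.cast_sub hk.le]; ring
    rw [h2]
    exact mul_mem (nat_mem _) (inv_mem h1)

lemma bern_mem {p : ℕ} [Fact p.Prime] (n : ℕ) (hn : n + 1 < p) : bernoulli n ∈ pR p := by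
  unfold bernoulli
  exact mul_mem (pow_mem (neg_mem (one_mem _)) _) (bern'_mem n hn)

/-- the reciprocal as p-integral element -/
noncomputable def iv (p : ℕ) [Fact p.Prime] (n : ℕ) : pR p :=
  if h : ¬ p ∣ n then ⟨1 / n, inv_mem h⟩ else 0

lemma iv_coe {p n : ℕ} [Fact p.Prime] (h : ¬ p ∣ n) : ((iv p n : pR p) : ℚ) = 1 / n := by
  unfold iv; rw [dif_pos h]

lemma red_iv {p n : ℕ} [Fact p.Prime] (h : ¬ p ∣ n) : red p (iv p n) = (n : ZMod p)⁻¹ := by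
  have h0 : (n : ℚ) ≠ 0 := by
    intro h'; norm_cast at h'; subst h'; simp at h
  have h1 : iv p n * (n : pR p) = 1 := by
    apply Subtype.ext
    push_cast
    rw [iv_coe h]; field_simp
  have h2 := congrArg (red p) h1
  rw [map_mul, map_one, map_natCast] at h2
  exact eq_inv_of_mul_eq_one_left h2

lemma red_T {p : ℕ} [Fact p.Prime] : red p ⟨T p 1 p, T_mem 1 p⟩ =
    ∑ x ∈ U p p, ∑ y ∈ U p p, ∑ z ∈ U p p,
      if x + y + z = 1 * p then (x : ZMod p)⁻¹ * (y : ZMod p)⁻¹ * (z : ZMod p)⁻¹ else 0 := by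
  have : (⟨T p 1 p, T_mem 1 p⟩ : pR p) = ∑ x ∈ U p p, ∑ y ∈ U p p, ∑ z ∈ U p p,
      if x + y + z = 1 * p then iv p x * iv p y * iv p z else 0 := by
    apply Subtype.ext
    simp only [AddSubmonoidClass.coe_finsetSum]
    unfold T
    refine sum_congr rfl fun x hx => sum_congr rfl fun y hy => sum_congr rfl fun z hz => ?_
    rw [mem_U] at hx hy hz
    split_ifs
    · push_cast
      rw [iv_coe hx.2, iv_coe hy.2, iv_coe hz.2]
    · rfl
  rw [this]
  simp only [map_sum]
  refine sum_congr rfl fun x hx => sum_congr rfl fun y hy => sum_congr rfl fun z hz => ?_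
  rw [mem_U] at hx hy hz
  split_ifs
  · rw [map_mul, map_mul, red_iv hx.2, red_iv hy.2, red_iv hz.2]
  · exact map_zero _

lemma mem_U' {p x : ℕ} : x ∈ U p p ↔ x < p ∧ 0 < x := by
  rw [mem_U]
  constructor
  · rintro ⟨h1, h2⟩
    refine ⟨h1, Nat.pos_of_ne_zero ?_⟩
    rintro rfl; simp at h2
  · rintro ⟨h1, h2⟩
    exact ⟨h1, fun h => by have := Nat.le_of_dvd h2 h; omega⟩

lemma cast_ne {p x : ℕ} (h1 : x < p) (h2 : 0 < x) : (x : ZMod p) ≠ 0 := by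
  rw [Ne, ZMod.natCast_eq_zero_iff]
  exact fun h => by have := Nat.le_of_dvd h2 h; omega

lemma reindex {p x : ℕ} (h : ℕ → ZMod p) :
    (∑ y ∈ U p p, if x + y < p then h (x + y) else 0)
      = ∑ l ∈ range p, if x < l then h l else 0 := by
  rw [← sum_filter, ← sum_filter]
  refine sum_nbij' (fun y => x + y) (fun l => l - x) ?_ ?_ ?_ ?_ ?_
  · intro y hy; simp [mem_U'] at hy ⊢; omega
  · intro y hy; simp [mem_U'] at hy ⊢; omega
  · intro y hy; simp
  · intro y hy; simp at hy ⊢; omega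
  · intro y hy; rfl

lemma base1 {p : ℕ} [Fact p.Prime] : red p ⟨T p 1 p, T_mem 1 p⟩ =
    -2 * ∑ l ∈ range p, ((l : ZMod p)⁻¹) ^ 2 * ∑ x ∈ range l, (x : ZMod p)⁻¹ := by
  rw [red_T]
  set F : ℕ → ℕ → ZMod p := fun x y =>
    if x + y < p then (x : ZMod p)⁻¹ * (((x + y : ℕ) : ZMod p)⁻¹) ^ 2 else 0 with hF
  have h1 : ∀ x ∈ U p p, ∀ y ∈ U p p, (∑ z ∈ U p p,
      if x + y + z = 1 * p then (x : ZMod p)⁻¹ * (y : ZMod p)⁻¹ * (z : ZMod p)⁻¹ else 0)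
      = -(F x y + F y x) := by
    intro x hx y hy
    rw [mem_U'] at hx hy
    by_cases h : x + y < p
    · simp only [hF]
      rw [if_pos h, if_pos (by omega), Finset.sum_eq_single (p - (x + y))]
      · rw [if_pos (by omega), Nat.cast_sub h.le, ZMod.natCast_self, zero_sub, add_comm y x]
        have hx0 := cast_ne hx.1 hx.2
        have hy0 := cast_ne hy.1 hy.2
        have hxy := cast_ne h (by omega)
        push_cast at hxy ⊢
        have hxy' : -((x : ZMod p) + y) ≠ 0 := neg_ne_zero.2 hxy
        rw [inv_neg]
        field_simp
        ring
      · intro z hz hz'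
        rw [if_neg (by omega)]
      · intro h'; rw [mem_U'] at h'; omega
    · simp only [hF]
      rw [if_neg h, if_neg (by omega)]
      simp only [add_zero, neg_zero]
      refine sum_eq_zero fun z hz => ?_
      rw [mem_U'] at hz
      rw [if_neg (by omega)]
  rw [sum_congr rfl fun x hx => sum_congr rfl (h1 x hx)]
  have h2 : ∑ x ∈ U p p, ∑ y ∈ U p p, F y x = ∑ x ∈ U p p, ∑ y ∈ U p p, F x y := sum_comm
  simp only [sum_neg_distrib, sum_add_distrib]
  rw [h2]
  have h3 : ∑ x ∈ U p p, ∑ y ∈ U p p, F x y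
      = ∑ l ∈ range p, ((l : ZMod p)⁻¹) ^ 2 * ∑ x ∈ range l, (x : ZMod p)⁻¹ := by
    have : ∀ x ∈ U p p, ∑ y ∈ U p p, F x y = ∑ l ∈ range p,
        if x < l then (x : ZMod p)⁻¹ * ((l : ZMod p)⁻¹) ^ 2 else 0 := fun x _ =>
      reindex (fun l => (x : ZMod p)⁻¹ * ((l : ZMod p)⁻¹) ^ 2)
    rw [sum_congr rfl this, sum_comm]
    refine sum_congr rfl fun l hl => ?_
    rw [mem_range] at hl
    rw [← sum_filter, mul_sum]
    refine sum_subset_zero_on_sdiff ?_ ?_ ?_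
    · intro x hx; simp at hx ⊢; exact hx.2
    · intro x hx
      simp [mem_U'] at hx
      have : x = 0 := by omega
      subst this; simp
    · intro x _; ring
  rw [h3]; ring

lemma red_bern_sum {p : ℕ} [Fact p.Prime] (hp3 : 3 ≤ p) (β : ℕ → pR p)
    (hβ : ∀ i, i + 1 < p → (β i : ℚ) = bernoulli i) (l : ℕ) :
    ∑ x ∈ range l, (x : ZMod p)⁻¹ =
      -∑ i ∈ range (p - 1), red p (β i) * ((p - 1).choose i : ZMod p) * (l : ZMod p) ^ (p - 1 - i) := by
  have h := sum_range_pow l (p - 2)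
  have e1 : p - 2 + 1 = p - 1 := by omega
  have e2 : ((p - 2 : ℕ) : ℚ) + 1 = ((p - 1 : ℕ) : ℚ) := by rw [← e1]; push_cast; ring
  rw [e1, e2, ← sum_div] at h
  have hp1 : ((p - 1 : ℕ) : ℚ) ≠ 0 := by
    norm_cast; omega
  rw [eq_div_iff hp1] at h
  have h' : (∑ x ∈ range l, (x : pR p) ^ (p - 2)) * ((p - 1 : ℕ) : pR p) =
      ∑ i ∈ range (p - 1), β i * ((p - 1).choose i : pR p) * (l : pR p) ^ (p - 1 - i) := by
    apply Subtype.ext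
    push_cast
    rw [h]
    refine sum_congr rfl fun i hi => ?_
    rw [mem_range] at hi
    rw [hβ i (by omega)]
  have h2 := congrArg (red p) h'
  simp only [map_mul, map_sum, map_pow, map_natCast] at h2
  rw [← h2, Nat.cast_sub (by omega), ZMod.natCast_self]
  have : ∀ x ∈ range l, (x : ZMod p)⁻¹ = (x : ZMod p) ^ (p - 2) := by
    intro x _
    by_cases hx : (x : ZMod p) = 0
    · rw [hx, inv_zero, zero_pow (by omega)]
    · apply inv_eq_of_mul_eq_one_right
      rw [← pow_succ', e1]
      exact ZMod.pow_card_sub_one_eq_one hx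
  rw [sum_congr rfl this]
  push_cast; ring

lemma sum_range_zmod {p : ℕ} [Fact p.Prime] (f : ZMod p → ZMod p) :
    ∑ l ∈ range p, f (l : ZMod p) = ∑ t : ZMod p, f t := by
  refine sum_nbij' (fun l => (l : ZMod p)) (fun t => t.val) ?_ ?_ ?_ ?_ ?_
  · intro l _; exact mem_univ _
  · intro t _; rw [mem_range]; exact ZMod.val_lt t
  · intro l hl; rw [mem_range] at hl; exact ZMod.val_cast_of_lt hl
  · intro t _; exact ZMod.natCast_zmod_val t
  · intro l _; rfl

lemma power_sum {p i : ℕ} [Fact p.Prime] (hp3 : 3 ≤ p) (hi : i < p - 1) :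
    ∑ t : ZMod p, (t⁻¹) ^ 2 * t ^ (p - 1 - i) = if i = p - 3 then -1 else 0 := by
  by_cases h : i = p - 3
  · rw [if_pos h]
    have e : p - 1 - i = 2 := by omega
    rw [e]
    have h1 : ∀ t : ZMod p, (t⁻¹) ^ 2 * t ^ 2 = 1 - (if t = 0 then 1 else 0) := by
      intro t
      split_ifs with ht
      · rw [ht]; simp
      · field_simp; simp
    simp_rw [h1, sum_sub_distrib]
    simp
  · rw [if_neg h]
    by_cases h2 : i = p - 2
    · have e : p - 1 - i = 1 := by omega
      rw [e]
      have h1 : ∀ t : ZMod p, (t⁻¹) ^ 2 * t ^ 1 = (t⁻¹) ^ 1 := by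
        intro t
        by_cases ht : t = 0
        · rw [ht]; simp
        · field_simp
      simp_rw [h1]
      rw [Fintype.sum_equiv (Equiv.inv (ZMod p)) (fun t => (t⁻¹) ^ 1) (fun t => t ^ 1)
        (fun t => by simp)]
      exact FiniteField.sum_pow_lt_card_sub_one _ 1 (by rw [ZMod.card]; omega)
    · obtain ⟨k, hk⟩ : ∃ k, p - 1 - i = (k + 1) + 2 := ⟨p - 4 - i, by omega⟩
      have h1 : ∀ t : ZMod p, (t⁻¹) ^ 2 * t ^ (p - 1 - i) = t ^ (k + 1) := by
        intro t
        rw [hk]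
        by_cases ht : t = 0
        · rw [ht]; simp
        · rw [pow_add t (k + 1) 2]; field_simp
      simp_rw [h1]
      exact FiniteField.sum_pow_lt_card_sub_one _ _ (by rw [ZMod.card]; omega)

lemma choose_zmod {p : ℕ} [Fact p.Prime] (hp3 : 3 ≤ p) :
    (((p - 1).choose (p - 3) : ℕ) : ZMod p) = 1 := by
  obtain ⟨q, rfl⟩ : ∃ q, p = q + 3 := ⟨p - 3, by omega⟩
  have h1 : (q + 3 - 1).choose (q + 3 - 3) = (q + 2).choose 2 := by
    simp only [Nat.add_sub_cancel]
    exact Nat.choose_symm_add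
  have h2 : (q + 2).choose 2 * 2 = (q + 2) * (q + 1) := by
    have := Nat.triangle_succ (q + 1)
    rw [Nat.choose_two_right, Nat.div_mul_cancel]
    · rfl
    · exact (Nat.even_mul_pred_self (q + 2)).two_dvd
  rw [h1]
  have h3 := congrArg (fun n : ℕ => (n : ZMod (q + 3))) h2
  have h4 : ((q + 3 : ℕ) : ZMod (q + 3)) = 0 := ZMod.natCast_self _
  have h5 : ((2 : ℕ) : ZMod (q + 3)) ≠ 0 := cast_ne (by omega) (by omega)
  push_cast at h3 h4 h5
  apply mul_right_cancel₀ h5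
  rw [h3]
  linear_combination (q : ZMod (q + 3)) * h4

lemma base {p : ℕ} [Fact p.Prime] (hp3 : 3 ≤ p) :
    ∃ e ∈ pR p, T p 1 p = -2 * bernoulli (p - 3) + p * e := by
  let β : ℕ → pR p := fun i => if h : i + 1 < p then ⟨bernoulli i, bern_mem i h⟩ else 0
  have hβ : ∀ i, i + 1 < p → (β i : ℚ) = bernoulli i := by
    intro i hi
    simp only [β]
    rw [dif_pos hi]
  have h1 := base1 (p := p)
  have h2 : ∑ l ∈ range p, ((l : ZMod p)⁻¹) ^ 2 * ∑ x ∈ range l, (x : ZMod p)⁻¹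
      = red p (β (p - 3)) := by
    simp_rw [red_bern_sum hp3 β hβ, mul_neg, sum_neg_distrib, mul_sum]
    rw [sum_comm]
    have : ∀ i ∈ range (p - 1), (∑ l ∈ range p, ((l : ZMod p)⁻¹) ^ 2 *
        (red p (β i) * ((p - 1).choose i : ZMod p) * (l : ZMod p) ^ (p - 1 - i)))
        = red p (β i) * ((p - 1).choose i : ZMod p) * if i = p - 3 then -1 else 0 := by
      intro i hi
      rw [mem_range] at hi
      rw [← power_sum hp3 hi, ← sum_range_zmod (fun t => (t⁻¹) ^ 2 * t ^ (p - 1 - i)), mul_sum]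
      refine sum_congr rfl fun l _ => ?_
      ring
    rw [sum_congr rfl this, sum_eq_single (p - 3)]
    · rw [if_pos rfl, choose_zmod hp3]; ring
    · intro i _ hi
      rw [if_neg hi, mul_zero]
    · intro h; simp at h; omega
  rw [h2] at h1
  have h3 : red p (⟨T p 1 p, T_mem 1 p⟩ + (β (p - 3) + β (p - 3))) = 0 := by
    rw [map_add, h1, map_add]; ring
  obtain ⟨z, hz, hzeq⟩ := red_zero _ h3
  refine ⟨z, hz, ?_⟩
  rw [← hzeq, ← hβ (p - 3) (by omega)]
  push_cast
  ring

lemma all_r {p : ℕ} [Fact p.Prime] (hp3 : 3 ≤ p) (r : ℕ) :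
    ∃ e ∈ pR p, T p 1 (p ^ (r + 1)) = -2 * (p : ℚ) ^ r * bernoulli (p - 3) + (p : ℚ) ^ (r + 1) * e := by
  induction r with
  | zero =>
    obtain ⟨e, he, h⟩ := base hp3
    exact ⟨e, he, by simpa using h⟩
  | succ r ih =>
    obtain ⟨e, he, h⟩ := ih
    obtain ⟨d, hd, h'⟩ := step (M := p ^ (r + 1)) hp3 (dvd_pow_self p (by omega))
      (pow_pos (by omega) _)
    refine ⟨e + d, add_mem he hd, ?_⟩
    rw [pow_succ' p (r + 1), h', h]
    push_cast
    ring

theorem stmt_0 (p r : ℕ) (hp : p.Prime) (hp3 : 3 ≤ p) (hr : 1 ≤ r) :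
    ratCong p r (hsum p 3 (p ^ r))
      (-2 * (p : ℚ) ^ (r - 1) * bernoulli (p - 3)) := by
  haveI : Fact p.Prime := ⟨hp⟩
  obtain ⟨s, rfl⟩ : ∃ s, r = s + 1 := ⟨r - 1, by omega⟩
  obtain ⟨e, he, h⟩ := all_r hp3 s
  refine ⟨e, ?_, he⟩
  rw [hsum_eq (dvd_pow_self p (by omega)), h, Nat.add_sub_cancel]
  ring
end

section
/- Let n be an even integer and p > n+2 a prime. Then the sum of 1/(l_1⋯l_n) over all n-tuples of positive integers with l_1+⋯+l_n = 2p and each l_i coprime to p is congruent modulo p to (n!/2)·Σ_{a odd, 3 ≤ a ≤ n-3} B_{p-a}·B_{p-n+a}/(a(n-a)). -/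
section helpers

open Polynomial hiding bernoulli
open Finset

/-- `x` is divisible by `p^r` in the ring of p-integral rationals. -/
def DD (p r : ℕ) (x : ℚ) : Prop := ∃ z : ℚ, x = (p : ℚ) ^ r * z ∧ ¬ (p ∣ z.den)

lemma not_dvd_of_lt'' {p b : ℕ} (h0 : 0 < b) (h : b < p) : ¬ p ∣ b :=
  fun hd => absurd (Nat.le_of_dvd h0 hd) (by omega)

lemma pint_iff {p : ℕ} (hp : p.Prime) (z : ℚ) :
    ¬ (p ∣ z.den) ↔ ∃ (a : ℤ) (b : ℕ), ¬ p ∣ b ∧ z * b = a := by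
  constructor
  · intro h
    exact ⟨z.num, z.den, h, Rat.mul_den_eq_num z⟩
  · rintro ⟨a, b, hb, h⟩ hd
    have hb0 : (b : ℚ) ≠ 0 := by
      rintro h0
      apply hb
      have : b = 0 := by exact_mod_cast h0
      simp [this]
    have hz : z = (a : ℚ) / ((b : ℤ) : ℚ) := by
      rw [eq_div_iff (by exact_mod_cast hb0)]
      exact_mod_cast h
    have h2 : (z.den : ℤ) ∣ (b : ℤ) := by
      rw [hz]; rw [← Rat.divInt_eq_div]; exact Rat.den_dvd a b
    exact hb (hd.trans (by exact_mod_cast h2))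

section
variable {p : ℕ} (hp : p.Prime)
include hp

lemma DD.add {r : ℕ} {x y : ℚ} (hx : DD p r x) (hy : DD p r y) : DD p r (x + y) := by
  obtain ⟨z, rfl, hz⟩ := hx
  obtain ⟨w, rfl, hw⟩ := hy
  refine ⟨z + w, by ring, ?_⟩
  rw [pint_iff hp] at *
  obtain ⟨a, b, hb, h⟩ := hz
  obtain ⟨c, d, hd, h'⟩ := hw
  refine ⟨a * d + c * b, b * d, hp.not_dvd_mul hb hd, ?_⟩
  push_cast
  rw [← h, ← h']; ring

lemma DD.mul {r s : ℕ} {x y : ℚ} (hx : DD p r x) (hy : DD p s y) : DD p (r + s) (x * y) := by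
  obtain ⟨z, rfl, hz⟩ := hx
  obtain ⟨w, rfl, hw⟩ := hy
  refine ⟨z * w, by ring, ?_⟩
  rw [pint_iff hp] at *
  obtain ⟨a, b, hb, h⟩ := hz
  obtain ⟨c, d, hd, h'⟩ := hw
  refine ⟨a * c, b * d, hp.not_dvd_mul hb hd, ?_⟩
  push_cast
  rw [← h, ← h']; ring

lemma DD.int (a : ℤ) : DD p 0 (a : ℚ) :=
  ⟨a, by simp, by simpa using hp.one_lt.ne'⟩

lemma DD.nat (a : ℕ) : DD p 0 (a : ℚ) := by
  simpa using DD.int hp (a : ℤ)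

lemma DD.p_pow (r : ℕ) : DD p r ((p : ℚ) ^ r) :=
  ⟨1, by simp, by simpa using hp.one_lt.ne'⟩

lemma DD.self : DD p 1 (p : ℚ) := by
  simpa using DD.p_pow hp 1

lemma DD.zero (r : ℕ) : DD p r 0 :=
  ⟨0, by simp, by simpa using hp.one_lt.ne'⟩

lemma DD.mono {r s : ℕ} {x : ℚ} (h : r ≤ s) (hx : DD p s x) : DD p r x := by
  obtain ⟨z, rfl, hz⟩ := hx
  obtain ⟨t, rfl⟩ := Nat.exists_eq_add_of_le h
  have h1 : DD p 0 ((p : ℚ) ^ t) := by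
    have := DD.nat hp (p ^ t)
    push_cast at this; exact this
  have h2 : DD p 0 z := ⟨z, by simp, hz⟩
  have := (DD.p_pow hp r).mul hp (h1.mul hp h2)
  simp only [add_zero] at this
  rwa [← mul_assoc, ← pow_add] at this

lemma DD.mul_int {r : ℕ} {x y : ℚ} (hx : DD p r x) (hy : DD p 0 y) : DD p r (x * y) := by
  simpa using hx.mul hp hy

lemma DD.int_mul {r : ℕ} {x y : ℚ} (hx : DD p 0 x) (hy : DD p r y) : DD p r (x * y) := by
  simpa using hx.mul hp hy

lemma DD.neg {r : ℕ} {x : ℚ} (hx : DD p r x) : DD p r (-x) := by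
  have := (DD.int hp (-1)).int_mul hp hx
  simpa using this

lemma DD.sub {r : ℕ} {x y : ℚ} (hx : DD p r x) (hy : DD p r y) : DD p r (x - y) := by
  rw [sub_eq_add_neg]; exact hx.add hp (hy.neg hp)

lemma DD.sum {ι : Type*} {r : ℕ} (s : Finset ι) (f : ι → ℚ) (h : ∀ i ∈ s, DD p r (f i)) :
    DD p r (∑ i ∈ s, f i) := by
  classical
  induction s using Finset.induction_on with
  | empty => simpa using DD.zero hp r
  | insert a s ha ih =>
    rw [Finset.sum_insert ha]
    exact (h a (by simp)).add hp (ih fun i hi => h i (by simp [hi]))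

lemma DD.inv {b : ℕ} (hb : ¬ p ∣ b) : DD p 0 ((1 : ℚ) / b) := by
  refine ⟨1 / b, by simp, ?_⟩
  rw [pint_iff hp]
  refine ⟨1, b, hb, ?_⟩
  have : (b : ℚ) ≠ 0 := by
    intro h0
    apply hb
    have : b = 0 := by exact_mod_cast h0
    simp [this]
  field_simp; simp

lemma DD.div_nat {r : ℕ} {x : ℚ} {b : ℕ} (hb : ¬ p ∣ b) (hx : DD p r x) : DD p r (x / b) := by
  have := hx.mul_int hp (DD.inv hp hb)
  rwa [mul_one_div] at this

lemma DD.div_p {r s : ℕ} {x : ℚ} (hx : DD p (r + s) x) : DD p r (x / (p : ℚ) ^ s) := by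
  obtain ⟨z, rfl, hz⟩ := hx
  have : (p : ℚ) ≠ 0 := by exact_mod_cast hp.ne_zero
  refine ⟨z, ?_, hz⟩
  field_simp
  ring

lemma not_dvd_of_lt' {b : ℕ} (h0 : 0 < b) (h : b < p) : ¬ p ∣ b :=
  fun hd => absurd (Nat.le_of_dvd h0 hd) (by omega)

lemma bern_int (j : ℕ) (hj : j + 1 < p) : DD p 0 (bernoulli j) := by
  have h1 : DD p 0 (bernoulli' j) := by
    induction j using Nat.strong_induction_on with
    | _ j ih =>
      rw [bernoulli'_def]
      refine DD.sub hp (by simpa using DD.int hp 1) (DD.sum hp _ _ fun k hk => ?_)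
      have hk : k < j := by simpa using hk
      have : (j.choose k : ℚ) / (j - k + 1) * bernoulli' k
          = (j.choose k : ℚ) / ((j - k + 1 : ℕ) : ℚ) * bernoulli' k := by
        push_cast [Nat.cast_sub hk.le]; rfl
      rw [this]
      refine DD.mul_int hp (DD.div_nat hp (not_dvd_of_lt' hp (by omega) (by omega)) (DD.nat hp _)) ?_
      exact ih k hk (by omega)
  rw [bernoulli]
  refine DD.int_mul hp ?_ h1
  have := DD.int hp ((-1) ^ j)
  push_cast at this; exact this

end

/-- The polynomial `∏_{j=1}^{N} (1 + X/j)`. -/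
noncomputable def QQ (N : ℕ) : ℚ[X] := ∏ j ∈ range N, (1 + C (1 / ((j : ℚ) + 1)) * X)

/-- Elementary symmetric functions of `1, 1/2, …, 1/N`. -/
noncomputable def hh (N k : ℕ) : ℚ := (QQ N).coeff k

lemma hh_zero (N : ℕ) : hh N 0 = 1 := by
  simp [hh, QQ, coeff_zero_eq_eval_zero, eval_prod]

lemma hh_succ (N k : ℕ) : hh (N + 1) (k + 1) = hh N (k + 1) + hh N k / (N + 1) := by
  rw [hh, QQ, prod_range_succ, mul_add, mul_one, coeff_add, ← mul_assoc, coeff_mul_X,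
    coeff_mul_C, ← QQ, ← hh, ← hh, mul_one_div]

lemma QQ_deg (N : ℕ) : (QQ N).natDegree < N + 1 := by
  rw [Nat.lt_succ_iff]
  refine (natDegree_prod_le _ _).trans ?_
  refine (Finset.sum_le_card_nsmul _ _ 1 fun j _ => ?_).trans (by simp)
  compute_degree

lemma QQ_eq (N : ℕ) : QQ N = ∑ i ∈ range (N + 1), C (hh N i) * X ^ i := by
  simpa [hh] using (QQ N).as_sum_range_C_mul_X_pow' (QQ_deg N)

lemma QQ_eval_succ (M : ℕ) (t : ℚ) :
    (t + 1) * (QQ M).eval (t + 1) = (t + M + 1) * (QQ M).eval t := by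
  induction M with
  | zero => simp [QQ]
  | succ M ih =>
    have h : ∀ s : ℚ, (QQ (M + 1)).eval s = (QQ M).eval s * (1 + 1 / ((M : ℚ) + 1) * s) := by
      intro s
      rw [QQ, prod_range_succ, ← QQ]; simp
    rw [h, h, ← mul_assoc, ih]
    push_cast
    field_simp
    ring

lemma hh_top (N : ℕ) : hh N N = 1 / (N.factorial : ℚ) := by
  induction N with
  | zero => simp [hh_zero]
  | succ N ih =>
    rw [hh_succ, ih]
    have : hh N (N + 1) = 0 := coeff_eq_zero_of_natDegree_lt (QQ_deg N)
    rw [this, Nat.factorial_succ]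
    push_cast
    field_simp
    simp

/-- Faulhaber polynomial. -/
noncomputable def SS (i : ℕ) : ℚ[X] :=
  ∑ j ∈ range (i + 1), C (bernoulli j * ((i + 1).choose j : ℚ) / (i + 1)) * X ^ (i + 1 - j)

lemma SS_eval (i N : ℕ) : (SS i).eval (N : ℚ) = ∑ m ∈ range N, (m : ℚ) ^ i := by
  rw [sum_range_pow, SS, eval_finsetSum]
  refine sum_congr rfl fun j _ => ?_
  simp
  ring

lemma QQ_faul (M : ℕ) :
    X * QQ M = ∑ i ∈ range (M + 1), C (((M : ℚ) + 1) * hh M i) * SS i := by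
  apply eq_of_infinite_eval_eq
  refine Set.Infinite.mono (s := Set.range (Nat.cast : ℕ → ℚ)) ?_
    (Set.infinite_range_of_injective Nat.cast_injective)
  rintro _ ⟨N, rfl⟩
  simp only [Set.mem_ofPred_eq, eval_finsetSum, eval_mul, eval_C, SS_eval, eval_X]
  induction N with
  | zero => simp
  | succ N ih =>
    push_cast
    rw [QQ_eval_succ]
    simp only [sum_range_succ _ N, mul_add, sum_add_distrib]
    rw [← ih]
    have : (QQ M).eval (N : ℚ) = ∑ i ∈ range (M + 1), hh M i * (N : ℚ) ^ i := by
      conv_lhs => rw [QQ_eq]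
      simp [eval_finsetSum]
    simp only [mul_assoc, ← mul_sum]
    rw [← this]
    ring

lemma SS_coeff_lt (i k : ℕ) (h : i < k) : (SS i).coeff (k + 1) = 0 := by
  rw [SS, finsetSum_coeff]
  refine sum_eq_zero fun j hj => ?_
  rw [coeff_C_mul, coeff_X_pow, if_neg (by omega), mul_zero]

lemma SS_coeff (i k : ℕ) (h : k ≤ i) : (SS i).coeff (k + 1) =
    bernoulli (i - k) * ((i + 1).choose (k + 1) : ℚ) / (i + 1) := by
  rw [SS, finsetSum_coeff, sum_eq_single (i - k)]
  · rw [coeff_C_mul, coeff_X_pow, if_pos (by omega), mul_one]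
    rw [show i - k = i + 1 - (k + 1) by omega, Nat.choose_symm (by omega)]
  · intro j hj hne
    have := mem_range.1 hj
    rw [coeff_C_mul, coeff_X_pow, if_neg (by omega), mul_zero]
  · intro h'
    exact absurd (mem_range.2 (by omega)) h'

lemma hh_faul (M k : ℕ) :
    hh M k = ∑ i ∈ range (M + 1), ((M : ℚ) + 1) * hh M i * (SS i).coeff (k + 1) := by
  have := congrArg (fun f => f.coeff (k + 1)) (QQ_faul M)
  simp only [coeff_X_mul, finsetSum_coeff, coeff_C_mul] at this
  exact this

section arith
variable {p : ℕ} (hp : p.Prime)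
include hp

lemma hh_int (N : ℕ) (hN : N < p) (k : ℕ) : DD p 0 (hh N k) := by
  induction N generalizing k with
  | zero =>
    rw [hh, QQ]
    simp only [range_zero, prod_empty, coeff_one]
    split_ifs
    · simpa using DD.nat hp 1
    · exact DD.zero hp 0
  | succ N ih =>
    cases k with
    | zero => rw [hh_zero]; simpa using DD.nat hp 1
    | succ k =>
      rw [hh_succ]
      refine (ih (by omega) _).add hp ?_
      have := DD.div_nat hp (not_dvd_of_lt' hp (b := N + 1) (by omega) (by omega)) (ih (by omega) k)
      push_cast at this
      exact this

/-- The terms below the top one in the Faulhaber recursion. -/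
lemma term_int (k i : ℕ) (hk : 1 ≤ k) (hi : i + 1 < p) : DD p 0 ((SS i).coeff (k + 1)) := by
  rcases lt_or_ge i k with h | h
  · rw [SS_coeff_lt i k h]; exact DD.zero hp 0
  · rw [SS_coeff i k h]
    have := DD.div_nat hp (not_dvd_of_lt' hp (b := i + 1) (by omega) (by omega))
      ((bern_int hp (i - k) (by omega)).mul_int hp (DD.nat hp ((i + 1).choose (k + 1))))
    push_cast at this
    exact this

lemma hh_split (k : ℕ) (hk1 : k + 1 < p) :
    hh (p - 1) k = (∑ i ∈ range (p - 1), (p : ℚ) * hh (p - 1) i * (SS i).coeff (k + 1)) +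
      hh (p - 1) (p - 1) * bernoulli (p - 1 - k) * (p.choose (k + 1) : ℚ) := by
  have hpc : ((p - 1 : ℕ) : ℚ) + 1 = p := by
    rw [Nat.cast_sub hp.one_lt.le]; simp
  have hp0 : (p : ℚ) ≠ 0 := by exact_mod_cast hp.ne_zero
  rw [hh_faul, sum_range_succ, SS_coeff _ _ (by omega), hpc, Nat.sub_add_cancel hp.one_lt.le]
  congr 1
  field_simp

lemma choose_p (k : ℕ) (hk : k + 1 < p) :
    (p.choose (k + 1) : ℚ) = p * (((p - 1).choose k : ℚ) / ((k + 1 : ℕ) : ℚ)) := by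
  have := Nat.add_one_mul_choose_eq (p - 1) k
  rw [Nat.sub_add_cancel hp.one_lt.le] at this
  have h2 : (p : ℚ) * ((p - 1).choose k : ℚ) = (p.choose (k + 1) : ℚ) * ((k + 1 : ℕ) : ℚ) := by
    exact_mod_cast this
  rw [← mul_div_assoc, h2]
  field_simp

lemma choose_p_DD (k : ℕ) (hk : k + 1 < p) : DD p 1 (p.choose (k + 1) : ℚ) := by
  rw [choose_p hp k hk]
  exact (DD.self hp).mul_int hp
    (DD.div_nat hp (not_dvd_of_lt' hp (by omega) (by omega)) (DD.nat hp _))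

lemma hh_D1 (k : ℕ) (hk : 1 ≤ k) (hk1 : k + 1 < p) : DD p 1 (hh (p - 1) k) := by
  have h1 := hp.one_lt
  rw [hh_split hp k hk1]
  refine DD.add hp (DD.sum hp _ _ fun i hi => ?_) ?_
  · have := mem_range.1 hi
    exact ((DD.self hp).mul_int hp (hh_int hp _ (by omega) i)).mul_int hp
      (term_int hp k i hk (by omega))
  · exact ((hh_int hp _ (by omega) _).mul_int hp (bern_int hp _ (by omega))).int_mul hp
      (choose_p_DD hp k hk1)

lemma hh_cong (k : ℕ) (hk : 1 ≤ k) (hk1 : k + 1 < p) :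
    DD p 2 (hh (p - 1) k -
      hh (p - 1) (p - 1) * bernoulli (p - 1 - k) * (p.choose (k + 1) : ℚ)) := by
  have h1 := hp.one_lt
  nth_rw 1 [hh_split hp k hk1]
  rw [add_sub_cancel_right]
  refine DD.sum hp _ _ fun i hi => ?_
  have hi' := mem_range.1 hi
  rcases Nat.eq_zero_or_pos i with rfl | h
  · rw [SS_coeff_lt 0 k hk]; simpa using DD.zero hp 2
  · exact ((DD.self hp).mul hp (hh_D1 hp i h (by omega))).mul_int hp
      (term_int hp k i hk (by omega))

lemma wilson_DD : DD p 1 (hh (p - 1) (p - 1) + 1) := by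
  haveI := Fact.mk hp
  have hw := ZMod.wilsons_lemma p
  have h2 : ((((p - 1).factorial + 1 : ℕ)) : ZMod p) = 0 := by
    push_cast; rw [hw]; ring
  rw [ZMod.natCast_eq_zero_iff] at h2
  obtain ⟨c, hc⟩ := h2
  have h3 : DD p 1 (((p - 1).factorial : ℚ) + 1) := by
    have : (((p - 1).factorial : ℚ) + 1) = p * c := by exact_mod_cast hc
    rw [this]
    exact (DD.self hp).mul_int hp (DD.nat hp c)
  have hnd : ¬ p ∣ (p - 1).factorial := by
    rw [hp.dvd_factorial]
    have := hp.one_lt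
    omega
  have h4 := DD.div_nat hp hnd h3
  have h0 : ((p - 1).factorial : ℚ) ≠ 0 := by exact_mod_cast Nat.factorial_ne_zero _
  rw [hh_top]
  convert h4 using 1
  field_simp
  ring

lemma choose_DD (k : ℕ) (hk : k < p) : DD p 1 (((p - 1).choose k : ℚ) - (-1) ^ k) := by
  induction k with
  | zero => simpa using DD.zero hp 1
  | succ k ih =>
    have h1 := Nat.choose_succ_succ' (p - 1) k
    rw [Nat.sub_add_cancel hp.one_lt.le] at h1
    have h2 : ((p - 1).choose (k + 1) : ℚ) = (p.choose (k + 1) : ℚ) - (p - 1).choose k := by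
      rw [h1]; push_cast; ring
    have := (choose_p_DD hp k hk).sub hp (ih (by omega))
    rw [h2]
    convert this using 1
    ring

/-- `c_k = B_{p-1-k}/(k+1)`; the classical congruence `e_k ≡ (-1)^{k+1} p c_k mod p^2`. -/
lemma hh_cong' (k : ℕ) (hk : 1 ≤ k) (hk1 : k + 1 < p) :
    DD p 2 (hh (p - 1) k -
      (-1) ^ (k + 1) * p * (bernoulli (p - 1 - k) / ((k + 1 : ℕ) : ℚ))) := by
  have hc : DD p 0 (bernoulli (p - 1 - k) / ((k + 1 : ℕ) : ℚ)) :=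
    DD.div_nat hp (not_dvd_of_lt' hp (by omega) (by omega)) (bern_int hp _ (by omega))
  have h1 := hh_cong hp k hk hk1
  rw [choose_p hp k hk1] at h1
  have h2 := wilson_DD hp
  have h3 := choose_DD hp k (by omega)
  have hi := DD.nat hp ((p - 1).choose k)
  have hm : DD p 0 ((-1 : ℚ)) := by simpa using DD.int hp (-1)
  have h4 : DD p 1 (hh (p - 1) (p - 1) * ((p - 1).choose k : ℚ) - (-1) ^ (k + 1)) := by
    have := (h2.mul_int hp hi).sub hp h3
    convert this using 1
    ring
  have h5 := ((DD.self hp).mul hp h4).mul_int hp hc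
  have := h1.add hp h5
  convert this using 1
  ring

lemma hh_odd (hp2 : p ≠ 2) (k : ℕ) (hk : Odd k) (hk1 : k + 3 < p) : DD p 2 (hh (p - 1) k) := by
  have h1 := hh_cong hp k hk.pos (by omega)
  have ho := hp.odd_of_ne_two hp2
  have : bernoulli (p - 1 - k) = 0 := by
    apply bernoulli_eq_zero_of_odd
    · obtain ⟨a, rfl⟩ := hk
      obtain ⟨b, hb⟩ := ho
      exact ⟨b - a - 1, by omega⟩
    · omega
  rw [this] at h1
  simpa using h1

end arith

/-- The polynomial `∏_{j=1}^{p-1} (1 + X/(p+j))`. -/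
noncomputable def QQ' (p : ℕ) : ℚ[X] :=
  ∏ j ∈ range (p - 1), (1 + C (1 / (((p + j : ℕ) : ℚ) + 1)) * X)

noncomputable def hh' (p k : ℕ) : ℚ := (QQ' p).coeff k

lemma hh'_zero (p : ℕ) : hh' p 0 = 1 := by
  simp [hh', QQ', coeff_zero_eq_eval_zero, eval_prod]

lemma QQ_comp (p : ℕ) : (QQ (p - 1)).comp (X + C (p : ℚ)) = C ((QQ (p - 1)).eval (p : ℚ)) * QQ' p := by
  rw [QQ, QQ', Polynomial.prod_comp, eval_prod, map_prod, ← prod_mul_distrib]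
  refine prod_congr rfl fun j _ => ?_
  have h1 : ((j : ℚ) + 1) ≠ 0 := by positivity
  have h2 : ((p : ℚ) + j + 1) ≠ 0 := by positivity
  simp only [add_comp, one_comp, mul_comp, C_comp, X_comp, eval_add, eval_one, eval_mul, eval_C,
    eval_X, mul_add, mul_one, ← mul_assoc, ← C_mul, ← C_1, ← C_add, Nat.cast_add]
  have : (1 + 1 / ((j : ℚ) + 1) * p) * (1 / ((p : ℚ) + j + 1)) = 1 / ((j : ℚ) + 1) := by
    field_simp
    ring
  rw [this]
  simp only [C_add]
  ring

lemma QQ_comp_coeff (p k : ℕ) (hp1 : 1 ≤ p) : ((QQ (p - 1)).comp (X + C (p : ℚ))).coeff k =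
    ∑ i ∈ range p, hh (p - 1) i * ((p : ℚ) ^ (i - k) * (i.choose k : ℚ)) := by
  conv_lhs => rw [QQ_eq]
  rw [Nat.sub_add_cancel hp1]
  simp [-map_natCast, finsetSum_coeff, coeff_X_add_C_pow]

section arith2
variable {p : ℕ} (hp : p.Prime)
include hp

lemma prod_int {ι : Type*} (s : Finset ι) (f : ι → ℚ) (hf : ∀ i ∈ s, DD p 0 (f i)) (k : ℕ) :
    DD p 0 ((∏ j ∈ s, (1 + C (f j) * X)).coeff k) := by
  classical
  induction s using Finset.induction_on generalizing k with
  | empty =>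
    simp only [prod_empty, coeff_one]
    split_ifs
    · simpa using DD.nat hp 1
    · exact DD.zero hp 0
  | insert a s ha ih =>
    rw [prod_insert ha, add_mul, one_mul, coeff_add, mul_assoc, coeff_C_mul]
    have hs : ∀ i ∈ s, DD p 0 (f i) := fun i hi => hf i (by simp [hi])
    refine (ih hs k).add hp ((hf a (by simp)).mul_int hp ?_)
    cases k with
    | zero => simpa using DD.zero hp 0
    | succ k => rw [coeff_X_mul]; exact ih hs k

lemma hh'_int (k : ℕ) : DD p 0 (hh' p k) := by
  refine prod_int hp _ _ (fun j hj => ?_) k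
  have := mem_range.1 hj
  have h := DD.inv hp (b := p + j + 1) (by
    rw [add_assoc, Nat.dvd_add_right (dvd_refl p)]
    exact not_dvd_of_lt' hp (by omega) (by omega))
  push_cast at h ⊢
  exact h

lemma QQ_eval_p (hp5 : 5 ≤ p) : DD p 3 ((QQ (p - 1)).eval (p : ℚ) - 1) := by
  have h1 := QQ_comp_coeff p 0 (by omega)
  rw [coeff_zero_eq_eval_zero, eval_comp] at h1
  simp only [eval_add, eval_X, eval_C, zero_add, Nat.sub_zero, Nat.choose_zero_right, Nat.cast_one,
    mul_one] at h1
  rw [h1]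
  have h2 : (range p) = insert 0 ((range p).erase 0) := by
    rw [insert_erase]; exact mem_range.2 (by omega)
  rw [h2, sum_insert (by simp), hh_zero, pow_zero, mul_one, add_sub_cancel_left]
  refine DD.sum hp _ _ fun i hi => ?_
  have hi0 : i ≠ 0 := (mem_erase.1 hi).1
  have hip : i < p := mem_range.1 (mem_erase.1 hi).2
  rcases (by omega : i = 1 ∨ i = 2 ∨ 3 ≤ i) with rfl | rfl | h
  · exact (hh_odd hp (by omega) 1 (by decide) (by omega)).mul hp (DD.p_pow hp 1)
  · exact (hh_D1 hp 2 (by omega) (by omega)).mul hp (DD.p_pow hp 2)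
  · exact ((hh_int hp _ (by omega) _).int_mul hp (DD.p_pow hp i)).mono hp h

lemma hh'_cong (hp5 : 5 ≤ p) (k : ℕ) (hk : k + 3 < p) :
    DD p 3 (hh' p k - hh (p - 1) k - (k + 1) * p * hh (p - 1) (k + 1)) := by
  have h1 := congrArg (fun f => f.coeff k) (QQ_comp p)
  simp only [coeff_C_mul] at h1
  rw [← hh', QQ_comp_coeff p k (by omega)] at h1
  have h2 := (QQ_eval_p hp hp5).mul_int hp (hh'_int hp k)
  have h3 : DD p 3 ((∑ i ∈ range p, hh (p - 1) i * ((p : ℚ) ^ (i - k) * (i.choose k : ℚ)))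
      - hh (p - 1) k - (k + 1) * p * hh (p - 1) (k + 1)) := by
    have ha : hh (p - 1) k = ∑ i ∈ range p, if i = k then hh (p - 1) k else 0 := by
      rw [sum_ite_eq', if_pos (mem_range.2 (by omega))]
    have hb : (k + 1) * p * hh (p - 1) (k + 1) =
        ∑ i ∈ range p, if i = k + 1 then (k + 1) * p * hh (p - 1) (k + 1) else 0 := by
      rw [sum_ite_eq', if_pos (mem_range.2 (by omega))]
    rw [hb]
    nth_rw 1 [ha]
    rw [← sum_sub_distrib, ← sum_sub_distrib]
    refine DD.sum hp _ _ fun i hi => ?_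
    have hip : i < p := mem_range.1 hi
    rcases (by omega : i < k ∨ i = k ∨ i = k + 1 ∨ i = k + 2 ∨ k + 3 ≤ i) with h | h | h | h | h
    · rw [if_neg (by omega), if_neg (by omega), Nat.choose_eq_zero_of_lt h]
      simpa using DD.zero hp 3
    · subst h
      simpa using DD.zero hp 3
    · subst h
      have : hh (p - 1) (k + 1) * ((p : ℚ) ^ (k + 1 - k) * ((k + 1).choose k : ℚ))
          - (if k + 1 = k then hh (p - 1) k else 0)
          - (if k + 1 = k + 1 then (k + 1) * p * hh (p - 1) (k + 1) else 0) = 0 := by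
        rw [if_neg (by omega), if_pos rfl, Nat.choose_succ_self_right]
        simp
        ring
      rw [this]; exact DD.zero hp 3
    · subst h
      rw [if_neg (by omega), if_neg (by omega), sub_zero, sub_zero, Nat.add_sub_cancel_left]
      exact (hh_D1 hp (k + 2) (by omega) (by omega)).mul hp
        ((DD.p_pow hp 2).mul_int hp (DD.nat hp _))
    · rw [if_neg (by omega), if_neg (by omega), sub_zero, sub_zero]
      exact (hh_int hp _ (by omega) _).int_mul hp
        (((DD.p_pow hp (i - k)).mono hp (by omega)).mul_int hp (DD.nat hp _))
  have := h3.sub hp h2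
  convert this using 1
  rw [h1]
  ring

lemma hh'_sub_D2 (hp5 : 5 ≤ p) (k : ℕ) (hk : k + 3 < p) : DD p 2 (hh' p k - hh (p - 1) k) := by
  have h1 := (hh'_cong hp hp5 k hk).mono hp (show 2 ≤ 3 by omega)
  have h2 := ((DD.nat hp (k + 1)).int_mul hp (DD.self hp)).mul hp
    (hh_D1 hp (k + 1) (by omega) (by omega))
  have := h1.add hp h2
  convert this using 1
  push_cast
  ring

lemma hh'_sub_D3 (hp5 : 5 ≤ p) (k : ℕ) (he : Even k) (hk : k + 4 < p) :
    DD p 3 (hh' p k - hh (p - 1) k) := by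
  have h1 := (hh'_cong hp hp5 k (by omega))
  have h2 := ((DD.nat hp (k + 1)).int_mul hp (DD.self hp)).mul hp
    (hh_odd hp (by omega) (k + 1) he.add_one (by omega))
  have := h1.add hp h2
  convert this using 1
  push_cast
  ring

lemma hh'_D1 (hp5 : 5 ≤ p) (k : ℕ) (hk1 : 1 ≤ k) (hk : k + 3 < p) : DD p 1 (hh' p k) := by
  have := ((hh'_sub_D2 hp hp5 k hk).mono hp (show 1 ≤ 2 by omega)).add hp
    (hh_D1 hp k hk1 (by omega))
  simpa using this

lemma hh'_odd (hp5 : 5 ≤ p) (k : ℕ) (hk1 : Odd k) (hk : k + 3 < p) : DD p 2 (hh' p k) := by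
  have := (hh'_sub_D2 hp hp5 k hk).add hp (hh_odd hp (by omega) k hk1 (by omega))
  simpa using this

end arith2

section ps
open PowerSeries (mk coeff)

/-- `-log(1-X)` as a power series. -/
noncomputable def LL : PowerSeries ℚ := PowerSeries.mk fun k => 1 / (k : ℚ)

/-- The part of `LL` with exponents prime to `p`. -/
noncomputable def LP (p : ℕ) : PowerSeries ℚ :=
  PowerSeries.mk fun k => if p ∣ k then 0 else 1 / (k : ℚ)

lemma hsum_eq_coeff (p n N : ℕ) : hsum p n N = PowerSeries.coeff N (LP p ^ n) := by
  have h0 : LP p ^ n = ∏ _i : Fin n, LP p := by simp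
  rw [h0, PowerSeries.coeff_prod, hsum]
  symm
  have h1 : ∑ l ∈ finsuppAntidiag (univ : Finset (Fin n)) N, ∏ i, PowerSeries.coeff (l i) (LP p)
      = ∑ l ∈ (finsuppAntidiag (univ : Finset (Fin n)) N).filter (fun l => ∀ i, ¬ p ∣ l i),
        ∏ i, PowerSeries.coeff (l i) (LP p) := by
    rw [sum_filter_of_ne]
    intro l _ hne i hd
    apply hne
    apply prod_eq_zero (mem_univ i)
    rw [LP, PowerSeries.coeff_mk, if_pos hd]
  rw [h1]
  refine sum_bij' (fun l _ => (l : Fin n → ℕ)) (fun l _ => Finsupp.equivFunOnFinite.symm l)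
    ?_ ?_ ?_ ?_ ?_
  · intro l hl
    simp only [mem_filter, mem_finsuppAntidiag, Fintype.mem_piFinset, mem_Icc] at hl ⊢
    refine ⟨fun i => ⟨?_, ?_⟩, hl.1.1, hl.2⟩
    · apply Nat.pos_of_ne_zero
      intro h
      apply hl.2 i
      simp [h]
    · rw [← hl.1.1]
      exact single_le_sum (f := fun i => l i) (fun _ _ => Nat.zero_le _) (mem_univ i)
  · intro l hl
    simp only [mem_filter, mem_finsuppAntidiag, Fintype.mem_piFinset, mem_Icc] at hl ⊢
    exact ⟨⟨hl.2.1, subset_univ _⟩, hl.2.2⟩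
  · intro l hl; simp
  · intro l hl; simp
  · intro l hl
    simp only [mem_filter] at hl
    refine prod_congr rfl fun i _ => ?_
    rw [LP, PowerSeries.coeff_mk, if_neg (hl.2 i)]

lemma LL_deriv : (1 - PowerSeries.X) * PowerSeries.derivative ℚ LL = 1 := by
  have : PowerSeries.derivative ℚ LL = PowerSeries.mk 1 := by
    ext n
    rw [PowerSeries.coeff_derivative, LL, PowerSeries.coeff_mk, PowerSeries.coeff_mk]
    push_cast
    field_simp
    simp
  rw [this, mul_comm]
  exact PowerSeries.mk_one_mul_one_sub_eq_one ℚ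

lemma LL_pow_deriv (n : ℕ) :
    (1 - PowerSeries.X) * PowerSeries.derivative ℚ (LL ^ (n + 1)) = ((n + 1 : ℕ) : PowerSeries ℚ) * LL ^ n := by
  rw [PowerSeries.derivative_pow, Nat.add_sub_cancel]
  calc _ = ((n + 1 : ℕ) : PowerSeries ℚ) * LL ^ n * ((1 - PowerSeries.X) * PowerSeries.derivative ℚ LL) := by ring
    _ = _ := by rw [LL_deriv, mul_one]

lemma LL_rec (n N : ℕ) :
    PowerSeries.coeff (N + 2) (LL ^ (n + 1)) * ((N : ℚ) + 2) =
      PowerSeries.coeff (N + 1) (LL ^ (n + 1)) * ((N : ℚ) + 1)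
      + (n + 1) * PowerSeries.coeff (N + 1) (LL ^ n) := by
  have h := congrArg (PowerSeries.coeff (R := ℚ) (N + 1)) (LL_pow_deriv n)
  rw [sub_mul, one_mul, map_sub, PowerSeries.coeff_succ_X_mul, PowerSeries.coeff_derivative,
    PowerSeries.coeff_derivative, ← map_natCast (PowerSeries.C (R := ℚ)), PowerSeries.coeff_C_mul] at h
  push_cast at h
  linear_combination h

lemma LL_one (n : ℕ) :
    PowerSeries.coeff 1 (LL ^ (n + 1)) = (n + 1) * PowerSeries.coeff 0 (LL ^ n) := by
  have h := congrArg (PowerSeries.coeff (R := ℚ) 0) (LL_pow_deriv n)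
  rw [sub_mul, one_mul, map_sub, PowerSeries.coeff_zero_X_mul, PowerSeries.coeff_derivative,
     ← map_natCast (PowerSeries.C (R := ℚ)), PowerSeries.coeff_C_mul] at h
  push_cast at h
  linear_combination h

lemma LL_coeff (n N : ℕ) :
    PowerSeries.coeff (N + 1) (LL ^ (n + 1)) * ((N : ℚ) + 1) = (n + 1).factorial * hh N n := by
  induction n generalizing N with
  | zero =>
    rw [hh_zero, zero_add, pow_one, LL, PowerSeries.coeff_mk]
    push_cast
    field_simp
    simp
  | succ n ih =>
    induction N with
    | zero =>
      rw [zero_add, LL_one]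
      have : PowerSeries.coeff 0 (LL ^ (n + 1)) = 0 := by
        simp [LL]
      rw [this]
      simp [hh, QQ, coeff_one]
    | succ N ihN =>
      rw [hh_succ]
      have h1 := LL_rec (n + 1) N
      have h2 := ih N
      rw [Nat.factorial_succ (n + 1)] at ihN ⊢
      have h3 : hh N n / ((N : ℚ) + 1) * (n + 1).factorial = PowerSeries.coeff (N + 1) (LL ^ (n + 1)) := by
        rw [div_mul_eq_mul_div, div_eq_iff (by positivity)]
        linear_combination -h2
      push_cast at *
      linear_combination h1 + ihN - (n + 1 + 1) * h3

/-- `LL - LP = X^p * MM`. -/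
noncomputable def MM (p : ℕ) : PowerSeries ℚ :=
  PowerSeries.mk fun k => if p ∣ k then 1 / ((k : ℚ) + p) else 0

/-- `LL = X * L1`. -/
noncomputable def L1 : PowerSeries ℚ := PowerSeries.mk fun k => 1 / ((k : ℚ) + 1)

lemma LL_eq : LL = PowerSeries.X * L1 := by
  ext k
  cases k with
  | zero => simp [LL]
  | succ k => rw [PowerSeries.coeff_succ_X_mul]; simp [LL, L1]

lemma LP_eq (p : ℕ) (hp : p ≠ 0) : LP p = LL - PowerSeries.X ^ p * MM p := by
  ext k
  rw [map_sub, PowerSeries.coeff_X_pow_mul']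
  simp only [LP, LL, MM, PowerSeries.coeff_mk]
  rcases lt_or_ge k p with h | h
  · rw [if_neg (show ¬ p ≤ k by omega)]
    split_ifs with hd
    · have : k = 0 := Nat.eq_zero_of_dvd_of_lt hd h
      simp [this]
    · simp
  · rw [if_pos h]
    have h2 : p ∣ k - p ↔ p ∣ k := by
      rw [Nat.dvd_sub_iff_left h (dvd_refl p)]
    simp only [h2]
    split_ifs
    · rw [Nat.cast_sub h]; simp
    · simp

lemma LP_coeff (p n : ℕ) (hp : 1 ≤ p) (hn : 3 ≤ n) :
    PowerSeries.coeff (2 * p) (LP p ^ n) =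
      PowerSeries.coeff (2 * p) (LL ^ n) - n / p * PowerSeries.coeff p (LL ^ (n - 1)) := by
  obtain ⟨q, rfl⟩ : ∃ q, p = q + 1 := ⟨p - 1, by omega⟩
  obtain ⟨m, rfl⟩ : ∃ m, n = m + 3 := ⟨n - 3, by omega⟩
  obtain ⟨k, hk⟩ := Polynomial.powAddExpansion L1 (-(PowerSeries.X ^ q * MM (q + 1))) (m + 3)
  have h1 : LP (q + 1) ^ (m + 3) = LL ^ (m + 3)
      - PowerSeries.C ((m + 3 : ℕ) : ℚ) * (PowerSeries.X ^ (q + 1) * (LL ^ (m + 2) * MM (q + 1)))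
      + PowerSeries.X ^ (2 * q + 3 + m) * (k * MM (q + 1) ^ 2) := by
    have e : LP (q + 1) = PowerSeries.X * (L1 + -(PowerSeries.X ^ q * MM (q + 1))) := by
      rw [LP_eq _ (by omega), LL_eq]; ring
    rw [e, mul_pow, hk, LL_eq, map_natCast, show m + 3 - 1 = m + 2 by omega]
    ring
  rw [h1, map_add, map_sub, PowerSeries.coeff_C_mul, PowerSeries.coeff_X_pow_mul',
    PowerSeries.coeff_X_pow_mul', if_pos (by omega), if_neg (by omega), add_zero]
  have h2 : PowerSeries.coeff (2 * (q + 1) - (q + 1)) (LL ^ (m + 2) * MM (q + 1)) =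
      1 / ((q + 1 : ℕ) : ℚ) * PowerSeries.coeff (q + 1) (LL ^ (m + 2)) := by
    rw [show 2 * (q + 1) - (q + 1) = q + 1 by omega, PowerSeries.coeff_mul,
      sum_eq_single (q + 1, 0)]
    · simp [MM]; ring
    · rintro ⟨a, b⟩ hab hne
      have hab' : a + b = q + 1 := mem_antidiagonal.1 hab
      have hb : b ≠ 0 := by
        rintro rfl
        apply hne
        simp at hab'
        simp [hab']
      rcases Nat.eq_zero_or_pos a with rfl | ha
      · have : PowerSeries.coeff 0 (LL ^ (m + 2)) = 0 := by simp [LL]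
        simp only [this, zero_mul]
      · have : PowerSeries.coeff b (MM (q + 1)) = 0 := by
          rw [MM, PowerSeries.coeff_mk, if_neg]
          exact not_dvd_of_lt'' (by omega) (by omega)
        simp only [this, mul_zero]
    · intro h; exact absurd (by simp) h
  rw [h2]
  simp only [show m + 3 - 1 = m + 2 by omega]
  ring

lemma LP_coeff_two (p : ℕ) (hp : 1 ≤ p) :
    PowerSeries.coeff (2 * p) (LP p ^ 2) =
      PowerSeries.coeff (2 * p) (LL ^ 2) - 1 / (p : ℚ) ^ 2 := by
  have hp0 : (p : ℚ) ≠ 0 := by positivity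
  have h1 : LP p ^ 2 = LL ^ 2
      - PowerSeries.C (2 : ℚ) * (PowerSeries.X ^ p * (LL * MM p))
      + PowerSeries.X ^ (2 * p) * (MM p ^ 2) := by
    rw [LP_eq _ (by omega), map_ofNat]
    ring
  rw [h1, map_add, map_sub, PowerSeries.coeff_C_mul, PowerSeries.coeff_X_pow_mul',
    PowerSeries.coeff_X_pow_mul', if_pos (by omega), if_pos (by omega), Nat.sub_self]
  have h2 : PowerSeries.coeff (2 * p - p) (LL * MM p) = 1 / (p : ℚ) ^ 2 := by
    rw [show 2 * p - p = p by omega, PowerSeries.coeff_mul, sum_eq_single (p, 0)]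
    · simp [MM, LL]; field_simp
    · rintro ⟨a, b⟩ hab hne
      have hab' : a + b = p := mem_antidiagonal.1 hab
      have hb : b ≠ 0 := by
        rintro rfl
        apply hne
        simp at hab'
        simp [hab']
      rcases Nat.eq_zero_or_pos a with rfl | ha
      · simp [LL]
      · have : PowerSeries.coeff b (MM p) = 0 := by
          rw [MM, PowerSeries.coeff_mk, if_neg]
          exact not_dvd_of_lt'' (by omega) (by omega)
        simp only [this, mul_zero]
    · intro h; exact absurd (by simp) h
  rw [h2]
  have h3 : PowerSeries.coeff 0 (MM p ^ 2) = 1 / (p : ℚ) ^ 2 := by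
    simp [MM]
  rw [h3]
  ring

/-- Elementary symmetric functions of `1/l`, `l < 2p` prime to `p`. -/
noncomputable def EE (p k : ℕ) : ℚ := (QQ (p - 1) * QQ' p).coeff k

lemma EE_eq (p k : ℕ) :
    EE p k = ∑ x ∈ antidiagonal k, hh (p - 1) x.1 * hh' p x.2 := by
  rw [EE, Polynomial.coeff_mul]; rfl

lemma hh_two (p k : ℕ) (hp : 1 ≤ p) :
    hh (2 * p - 1) (k + 1) = EE p (k + 1) + EE p k / p := by
  have h : QQ (2 * p - 1) = QQ (p - 1) * QQ' p + C (1 / (p : ℚ)) * (QQ (p - 1) * QQ' p) * X := by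
    obtain ⟨q, rfl⟩ : ∃ q, p = q + 1 := ⟨p - 1, by omega⟩
    rw [show 2 * (q + 1) - 1 = (q + 1) + q by omega, QQ, prod_range_add, prod_range_succ, ← QQ, QQ']
    simp only [Nat.add_sub_cancel]
    push_cast
    ring
  rw [hh, h, coeff_add, coeff_mul_X, coeff_C_mul, ← EE, ← EE]
  ring

end ps

lemma hsum_formula {p : ℕ} (hp : 1 ≤ p) (m : ℕ) (hm : 2 ≤ m) :
    hsum p (m + 2) (2 * p) = (m + 2).factorial / 2 *
      ((p * EE p (m + 1) + (EE p m - 2 * hh (p - 1) m)) / (p : ℚ) ^ 2) := by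
  have hp0 : (p : ℚ) ≠ 0 := by positivity
  rw [hsum_eq_coeff, LP_coeff p _ hp (by omega)]
  have h1 := LL_coeff (m + 1) (2 * p - 1)
  have h2 := LL_coeff m (p - 1)
  rw [hh_two p m hp, Nat.sub_add_cancel (by omega), Nat.cast_sub (by omega)] at h1
  rw [Nat.sub_add_cancel (by omega), Nat.cast_sub (by omega)] at h2
  push_cast at h1 h2
  simp only [sub_add_cancel] at h1 h2
  rw [show m + 2 - 1 = m + 1 by omega]
  rw [← eq_div_iff (by positivity)] at h1 h2
  rw [h1, h2, Nat.factorial_succ (m + 1)]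
  push_cast
  field_simp
  ring

lemma hsum_two {p : ℕ} (hp : 1 ≤ p) : hsum p 2 (2 * p) = EE p 1 / p := by
  have hp0 : (p : ℚ) ≠ 0 := by positivity
  rw [hsum_eq_coeff, LP_coeff_two p hp]
  have h1 := LL_coeff 1 (2 * p - 1)
  have h3 : EE p 0 = 1 := by rw [EE_eq]; simp [hh_zero, hh'_zero]
  rw [hh_two p 0 hp, Nat.sub_add_cancel (by omega), Nat.cast_sub (by omega), h3] at h1
  push_cast at h1
  simp only [sub_add_cancel] at h1
  rw [← eq_div_iff (by positivity)] at h1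
  rw [h1]
  norm_num
  field_simp
  ring

section fin
variable {p : ℕ} (hp : p.Prime)
include hp

lemma EE_odd (k : ℕ) (hp5 : 5 ≤ p) (hk : Odd k) (hkp : k + 3 < p) : DD p 2 (EE p k) := by
  rw [EE_eq]
  refine DD.sum hp _ _ ?_
  rintro ⟨i, j⟩ hij
  have hij' : i + j = k := mem_antidiagonal.1 hij
  dsimp only
  rcases Nat.eq_zero_or_pos i with rfl | hi
  · rw [hh_zero, one_mul]
    exact hh'_odd hp hp5 j (by rwa [← hij', zero_add] at hk) (by omega)
  rcases Nat.eq_zero_or_pos j with rfl | hj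
  · rw [hh'_zero, mul_one]
    exact hh_odd hp (by omega) i (by rwa [← hij', add_zero] at hk) (by omega)
  exact (hh_D1 hp i hi (by omega)).mul hp (hh'_D1 hp hp5 j hj (by omega))

/-- `B_{p-1-i}/(i+1)` -/
noncomputable def cc (p i : ℕ) : ℚ := bernoulli (p - 1 - i) / ((i + 1 : ℕ) : ℚ)

lemma EE_even (m : ℕ) (hp5 : 5 ≤ p) (hm : Even m) (hm2 : 2 ≤ m) (hmp : m + 4 < p) :
    DD p 3 (EE p m - 2 * hh (p - 1) m -
      (p : ℚ) ^ 2 * ∑ i ∈ Ico 1 m, cc p i * cc p (m - i)) := by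
  have h1 : EE p m = hh' p m + (∑ i ∈ Ico 1 m, hh (p - 1) i * hh' p (m - i)) + hh (p - 1) m := by
    rw [EE_eq, Nat.sum_antidiagonal_eq_sum_range_succ_mk, sum_range_succ, range_eq_Ico,
      sum_eq_sum_Ico_succ_bot (by omega)]
    simp [hh_zero, hh'_zero]
  have h2 : DD p 3 (∑ i ∈ Ico 1 m, (hh (p - 1) i * hh' p (m - i) -
      (p : ℚ) ^ 2 * (cc p i * cc p (m - i)))) := by
    refine DD.sum hp _ _ fun i hi => ?_
    have hi' := mem_Ico.1 hi
    obtain ⟨j, rfl⟩ : ∃ j, m = i + j := ⟨m - i, by omega⟩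
    rw [Nat.add_sub_cancel_left]
    have a1 := hh_cong' hp i (by omega) (by omega)
    have a2 := hh_cong' hp j (by omega) (by omega)
    have a3 := hh'_sub_D2 hp hp5 j (by omega)
    have a4 := hh_D1 hp i (by omega) (by omega)
    rw [← cc] at a1 a2
    have c2 : DD p 0 (cc p j) := 
      DD.div_nat hp (not_dvd_of_lt' hp (by omega) (by omega)) (bern_int hp _ (by omega))
    have s : DD p 0 ((-1 : ℚ) ^ (j + 1)) := by
      have := DD.int hp ((-1) ^ (j + 1))
      push_cast at this; exact this
    have b1 := a4.mul hp (a3.add hp a2)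
    have b2 := a1.mul hp ((s.int_mul hp (DD.self hp)).mul_int hp c2)
    have := b1.add hp b2
    convert this using 1
    have hs : (-1 : ℚ) ^ (i + 1) * (-1) ^ (j + 1) = 1 := by
      rw [← pow_add]
      apply Even.neg_one_pow
      rw [show i + 1 + (j + 1) = (i + j) + 2 by ring]
      exact hm.add (by decide)
    linear_combination (-(p : ℚ) ^ 2 * cc p i * cc p j) * (1 - hs) 
  have h3 := (hh'_sub_D3 hp hp5 m hm hmp).add hp h2
  convert h3 using 1
  rw [h1, sum_sub_distrib, mul_sum]
  ring

end fin

lemma rhs_eq {p n : ℕ} (hn : Even n) (hp : p.Prime) (hpn : n + 2 < p) (hn4 : 4 ≤ n) :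
    ∑ a ∈ (Finset.Icc 2 (n - 2)).filter (fun a => Odd a),
          bernoulli (p - a) * bernoulli (p - n + a) / ((a : ℚ) * (n - a)) =
    ∑ i ∈ Ico 1 (n - 2), cc p i * cc p (n - 2 - i) := by
  have ho := hp.odd_of_ne_two (by omega)
  rw [sum_filter_of_ne]
  · refine sum_bij' (fun a _ => a - 1) (fun i _ => i + 1) ?_ ?_ ?_ ?_ ?_
    · intro a ha; rw [mem_Icc] at ha; rw [mem_Ico]; omega
    · intro a ha; rw [mem_Ico] at ha; rw [mem_Icc]; omega
    · intro a ha; rw [mem_Icc] at ha; omega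
    · intro a ha; omega
    · intro a ha
      rw [mem_Icc] at ha
      rw [cc, cc, show p - 1 - (a - 1) = p - a by omega,
        show p - 1 - (n - 2 - (a - 1)) = p - n + a by omega,
        show a - 1 + 1 = a by omega, show n - 2 - (a - 1) + 1 = n - a by omega,
        Nat.cast_sub (by omega), div_mul_div_comm]
  · intro a ha hne
    rw [mem_Icc] at ha
    by_contra hodd
    apply hne
    rw [bernoulli_eq_zero_of_odd (n := p - a) _ (by omega)]
    · simp
    · rw [Nat.not_odd_iff_even] at hodd
      exact Nat.Odd.sub_even (by omega) ho hodd

end helpers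

theorem stmt_9 (p n : ℕ) (hn : Even n) (hp : p.Prime) (hpn : n + 2 < p) :
    ratCong p 1 (hsum p n (2 * p))
      ((Nat.factorial n : ℚ) / 2 *
        ∑ a ∈ (Finset.Icc 2 (n - 2)).filter (fun a => Odd a),
          bernoulli (p - a) * bernoulli (p - n + a) / ((a : ℚ) * (n - a))) := by
  change DD p 1 _
  have hp0 : (p : ℚ) ≠ 0 := by exact_mod_cast hp.ne_zero
  rcases (by grind : n = 0 ∨ n = 2 ∨ 4 ≤ n) with rfl | rfl | h4
  · have h0 : hsum p 0 (2 * p) = 0 := by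
      rw [hsum_eq_coeff, pow_zero, PowerSeries.coeff_one, if_neg]
      have := hp.pos
      omega
    rw [h0]
    simpa using DD.zero hp 1
  · have h5 : 5 ≤ p := by omega
    rw [hsum_two hp.one_lt.le]
    have := (EE_odd hp 1 h5 (by decide) (by omega)).div_p hp (r := 1) (s := 1)
    simpa using this
  · have h5 : 5 ≤ p := by omega
    rw [rhs_eq hn hp hpn h4]
    obtain ⟨m, rfl⟩ : ∃ m, n = m + 2 := ⟨n - 2, by omega⟩
    have hm : Even m := by grind
    rw [hsum_formula hp.one_lt.le m (by omega), Nat.add_sub_cancel]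
    have a1 := (DD.self hp).mul hp (EE_odd hp (m + 1) h5 hm.add_one (by omega))
    have a2 := EE_even hp m h5 hm (by omega) (by omega)
    have a3 := (a1.add hp a2).div_p hp (r := 1) (s := 2)
    have a4 := DD.div_nat hp (b := 2) (not_dvd_of_lt' hp (by omega) (by omega))
      (DD.nat hp (m + 2).factorial)
    have a5 := a4.int_mul hp a3
    convert a5 using 1
    push_cast
    field_simp
    ring
end
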